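/- The functions μ_b and μ_f are C¹ on D₁, and for every (K,c) ∈ D₁ the partial derivatives with respect to c satisfy ∂μ_b/∂c (K,c) > 0 and ∂μ_f/∂c (K,c) < 0; in particular, for each fixed K ∈ (K₀,K_M), c ↦ μ_b(K,c) is strictly increasing and c ↦ μ_f(K,c) is strictly decreasing on (c₁(K), c_M(K)). -/

import Mathlib

open Set Filter MeasureTheory

noncomputable section

namespace TrafficTW

/-- `f(u) = (K u - V(u) - c)/K`. -/
def fTV (V : ℝ → ℝ) (K c u : ℝ) : ℝ := (K * u - V u - c) / K

/-- `f'(u) = (K - V'(u))/K`. -/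
def fdTV (V' : ℝ → ℝ) (K u : ℝ) : ℝ := (K - V' u) / K

/-- `h(u,μ) = f'(u) + μ`. -/
def hTV (V' : ℝ → ℝ) (K μ u : ℝ) : ℝ := fdTV V' K u + μ

/-- `g₁(u) = 1/(τ κ(1/u))`. -/
def g1TV (κ : ℝ → ℝ) (τ u : ℝ) : ℝ := 1 / (τ * κ (1 / u))

/-- `g₂(u) = u/(2 τ κ(1/u))`. -/
def g2TV (κ : ℝ → ℝ) (τ u : ℝ) : ℝ := u / (2 * τ * κ (1 / u))

/-- The traveling-wave system (TV): `u' = w`, `w' = g₁ f + g₂ h w`. -/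
def IsTVSol (V V' κ : ℝ → ℝ) (τ K c μ : ℝ) (u w : ℝ → ℝ) : Prop :=
  (∀ z, HasDerivAt u (w z) z) ∧
  (∀ z, HasDerivAt w
    (g1TV κ τ (u z) * fTV V K c (u z) + g2TV κ τ (u z) * hTV V' K μ (u z) * w z) z)

/-- Assumption (A1), where `V'` and `V''` are the first and second derivatives of `V`. -/
def A1 (V V' V'' : ℝ → ℝ) (UM : ℝ) : Prop :=
  (∀ u ∈ Ici (0:ℝ), HasDerivWithinAt V (V' u) (Ici 0) u) ∧
  ContinuousOn V' (Ici 0) ∧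
  (∀ u ∈ Ioi (0:ℝ), HasDerivAt V' (V'' u) u) ∧
  ContinuousOn V'' (Ioi 0) ∧
  (∀ u, 0 < u → 0 < V' u) ∧ (∃ M, ∀ u, 0 < u → V' u ≤ M) ∧
  Tendsto V' atTop (nhds 0) ∧
  0 < UM ∧ (∀ u, 0 < u → V' u ≤ V' UM) ∧
  (∀ u, 0 < u → (V'' u = 0 ↔ u = UM))

/-- Assumption (A2). -/
def A2 (κ : ℝ → ℝ) : Prop :=
  ContDiffOn ℝ 1 κ (Ioi 0) ∧ ∀ ρ, 0 < ρ → 0 < κ ρ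

/-- `c₀ = -V(0)`. -/
def c0v (V : ℝ → ℝ) : ℝ := - V 0

/-- `c_M(K) = K u_M(K) - V(u_M(K))`, where `uMx` is the function `K ↦ u_M(K)`. -/
def cMf (V : ℝ → ℝ) (uMx : ℝ → ℝ) (K : ℝ) : ℝ := K * uMx K - V (uMx K)

/-- `c_m(K) = K u_m(K) - V(u_m(K))`, where `umx` is the function `K ↦ u_m(K)`. -/
def cmf (V : ℝ → ℝ) (umx : ℝ → ℝ) (K : ℝ) : ℝ := K * umx K - V (umx K)

/-- `c₁(K) = max (c₀, c_m(K))`. -/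
def c1f (V : ℝ → ℝ) (umx : ℝ → ℝ) (K : ℝ) : ℝ := max (c0v V) (cmf V umx K)

/-- `uMx K = u_M(K)` is the unique local maximum point of `u ↦ K u - V(u)`, characterized
by `u_M(K) ∈ (0, U_M)` and `V'(u_M(K)) = K`, for `K ∈ (K₀, K_M)`. -/
def UMaxHyp (V' : ℝ → ℝ) (UM : ℝ) (uMx : ℝ → ℝ) : Prop :=
  ∀ K, V' 0 < K → K < V' UM → uMx K ∈ Ioo 0 UM ∧ V' (uMx K) = K

/-- `umx K = u_m(K)` is the unique local minimum point of `u ↦ K u - V(u)`, characterized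
by `u_m(K) ∈ (U_M, ∞)` and `V'(u_m(K)) = K`, for `K ∈ (0, K_M)`. -/
def UMinHyp (V' : ℝ → ℝ) (UM : ℝ) (umx : ℝ → ℝ) : Prop :=
  ∀ K, 0 < K → K < V' UM → UM < umx K ∧ V' (umx K) = K

/-- Characterization of `K₁ ∈ (K₀, K_M)`: `c_m(K) < c₀` for `K < K₁` and `c_m(K) > c₀`
for `K > K₁`. -/
def K1Hyp (V V' : ℝ → ℝ) (UM : ℝ) (umx : ℝ → ℝ) (K₁ : ℝ) : Prop :=
  V' 0 < K₁ ∧ K₁ < V' UM ∧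
  (∀ K, 0 < K → K < K₁ → cmf V umx K < c0v V) ∧
  cmf V umx K₁ = c0v V ∧
  (∀ K, K₁ < K → K < V' UM → c0v V < cmf V umx K)

/-- The parameter region `D₁`. -/
def D1 (V V' : ℝ → ℝ) (UM : ℝ) (uMx umx : ℝ → ℝ) : Set (ℝ × ℝ) :=
  {p | V' 0 < p.1 ∧ p.1 < V' UM ∧ c1f V umx p.1 < p.2 ∧ p.2 < cMf V uMx p.1}

/-- The parameter region `D₂`. -/
def D2 (V V' : ℝ → ℝ) (umx : ℝ → ℝ) (K₁ : ℝ) : Set (ℝ × ℝ) :=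
  {p | (V' 0 < p.1 ∧ p.1 < K₁ ∧ p.2 = c0v V) ∨
       (0 < p.1 ∧ p.1 < K₁ ∧ cmf V umx p.1 < p.2 ∧ p.2 < c0v V)}

/-- For `(K,c) ∈ D₁`: `u₁ < u₀ < u₂` are the exactly three positive zeros of `f`. -/
def ZerosD1 (V : ℝ → ℝ) (K c u1 u0 u2 : ℝ) : Prop :=
  0 < u1 ∧ u1 < u0 ∧ u0 < u2 ∧
  fTV V K c u1 = 0 ∧ fTV V K c u0 = 0 ∧ fTV V K c u2 = 0 ∧
  ∀ u, 0 < u → fTV V K c u = 0 → u = u1 ∨ u = u0 ∨ u = u2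

/-- For `(K,c) ∈ D₂`: `u₀ < u₂` are the exactly two positive zeros of `f`. -/
def ZerosD2 (V : ℝ → ℝ) (K c u0 u2 : ℝ) : Prop :=
  0 < u0 ∧ u0 < u2 ∧ fTV V K c u0 = 0 ∧ fTV V K c u2 = 0 ∧
  ∀ u, 0 < u → fTV V K c u = 0 → u = u0 ∨ u = u2

/-- Condition (HE1). -/
def HE1 (u1 u2 : ℝ) (u w : ℝ → ℝ) : Prop :=
  Tendsto u atBot (nhds u1) ∧ Tendsto u atTop (nhds u2) ∧
  Tendsto w atBot (nhds 0) ∧ Tendsto w atTop (nhds 0) ∧ ∀ z, 0 < w z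

/-- Condition (HE2). -/
def HE2 (u1 u2 : ℝ) (u w : ℝ → ℝ) : Prop :=
  Tendsto u atBot (nhds u2) ∧ Tendsto u atTop (nhds u1) ∧
  Tendsto w atBot (nhds 0) ∧ Tendsto w atTop (nhds 0) ∧ ∀ z, w z < 0

/-- Condition (HO) with level `ub`. -/
def HO (ub : ℝ) (u w : ℝ → ℝ) : Prop :=
  Tendsto u atBot (nhds ub) ∧ Tendsto u atTop (nhds ub) ∧
  Tendsto w atBot (nhds 0) ∧ Tendsto w atTop (nhds 0) ∧
  ¬ (∀ z, u z = ub ∧ w z = 0)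

/-- (TV) with parameter `μ` has a positive solution satisfying (HE1). -/
def HasHE1 (V V' κ : ℝ → ℝ) (τ K c μ u1 u2 : ℝ) : Prop :=
  ∃ u w : ℝ → ℝ, IsTVSol V V' κ τ K c μ u w ∧ (∀ z, 0 < u z) ∧ HE1 u1 u2 u w

/-- (TV) with parameter `μ` has a positive solution satisfying (HE2). -/
def HasHE2 (V V' κ : ℝ → ℝ) (τ K c μ u1 u2 : ℝ) : Prop :=
  ∃ u w : ℝ → ℝ, IsTVSol V V' κ τ K c μ u w ∧ (∀ z, 0 < u z) ∧ HE2 u1 u2 u w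

/-- (TV) with parameter `μ` has a positive solution satisfying (HO) with level `ub`. -/
def HasHO (V V' κ : ℝ → ℝ) (τ K c μ ub : ℝ) : Prop :=
  ∃ u w : ℝ → ℝ, IsTVSol V V' κ τ K c μ u w ∧ (∀ z, 0 < u z) ∧ HO ub u w

/-- Condition (H): `∫₁^∞ dρ/(ρ³ κ(ρ)) = ∞`. -/
def CondH (κ : ℝ → ℝ) : Prop :=
  ¬ IntegrableOn (fun ρ => 1 / (ρ ^ 3 * κ ρ)) (Ioi 1)

/-- Condition (C). -/
def CondC (V' κ : ℝ → ℝ) (UM K₁ K : ℝ) : Prop :=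
  (K₁ < K ∧ K < V' UM) ∨ (CondH κ ∧ V' 0 < K ∧ K ≤ K₁)

/-- Periodic solution. -/
def IsPeriodicSol (u w : ℝ → ℝ) : Prop :=
  ∃ Z, 0 < Z ∧ ∀ z, u (z + Z) = u z ∧ w (z + Z) = w z

/-- Nonconstant pair of functions. -/
def Nonconst (u w : ℝ → ℝ) : Prop := ∃ z, u z ≠ u 0 ∨ w z ≠ w 0

/-- Discriminant of the Jacobian at an equilibrium `(u,0)`. -/
def discTV (V' κ : ℝ → ℝ) (τ K u μ : ℝ) : ℝ :=
  (g2TV κ τ u) ^ 2 * (hTV V' K μ u) ^ 2 + 4 * g1TV κ τ u * fdTV V' K u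

/-- The eigenvalue `λ₊(u)`. -/
def lamP (V' κ : ℝ → ℝ) (τ K u μ : ℝ) : ℝ :=
  (g2TV κ τ u * hTV V' K μ u + Real.sqrt (discTV V' κ τ K u μ)) / 2

/-- The eigenvalue `λ₋(u)`. -/
def lamM (V' κ : ℝ → ℝ) (τ K u μ : ℝ) : ℝ :=
  (g2TV κ τ u * hTV V' K μ u - Real.sqrt (discTV V' κ τ K u μ)) / 2

/-- `Z` is the minimal period of `(u,w)`. -/
def IsMinPeriod (u w : ℝ → ℝ) (Z : ℝ) : Prop :=
  0 < Z ∧ (∀ z, u (z + Z) = u z ∧ w (z + Z) = w z) ∧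
  ∀ Z', 0 < Z' → (∀ z, u (z + Z') = u z ∧ w (z + Z') = w z) → Z ≤ Z'

open Topology

section

theorem bar_lemma {g g' : ℝ → ℝ} {a b : ℝ} (hc : ContinuousOn g (Icc a b)) (ha : 0 ≤ g a)
    (hd : ∀ s ∈ Ioo a b, HasDerivAt g (g' s) s)
    (h : ∀ s ∈ Ioo a b, g s < 0 → 0 ≤ g' s) : ∀ s ∈ Icc a b, 0 ≤ g s := by
  intro s1 hs1
  by_contra hneg
  push Not at hneg
  set S := {x | x ∈ Icc a s1 ∧ 0 ≤ g x} with hS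
  have hc1 : ContinuousOn g (Icc a s1) := hc.mono (Icc_subset_Icc_right hs1.2)
  have hclosed : IsClosed S := by
    have := hc1.preimage_isClosed_of_isClosed isClosed_Icc (isClosed_Ici (a := (0:ℝ)))
    exact this
  have haS : a ∈ S := ⟨⟨le_refl _, hs1.1⟩, ha⟩
  have hbdd : BddAbove S := ⟨s1, fun x hx => hx.1.2⟩
  have ht := hclosed.csSup_mem ⟨a, haS⟩ hbdd
  set t := sSup S with ht_def
  have htlt : t < s1 := by
    rcases lt_or_eq_of_le ht.1.2 with h1 | h1
    · exact h1
    · have h2 := ht.2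
      rw [h1] at h2; linarith
  have hneg' : ∀ x ∈ Ioo t s1, g x < 0 := by
    intro x hx
    by_contra hx0
    push Not at hx0
    have : x ∈ S := ⟨⟨le_trans ht.1.1 hx.1.le, hx.2.le⟩, hx0⟩
    exact absurd (le_csSup hbdd this) (not_le.mpr hx.1)
  have hmono : MonotoneOn g (Icc t s1) := by
    apply monotoneOn_of_deriv_nonneg (convex_Icc t s1)
    · exact hc1.mono (Icc_subset_Icc_left ht.1.1)
    · rw [interior_Icc]
      intro x hx
      exact (hd x ⟨lt_of_le_of_lt ht.1.1 hx.1, lt_of_lt_of_le hx.2 hs1.2⟩).differentiableAt.differentiableWithinAt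
    · rw [interior_Icc]
      intro x hx
      have hx' : x ∈ Ioo a b := ⟨lt_of_le_of_lt ht.1.1 hx.1, lt_of_lt_of_le hx.2 hs1.2⟩
      rw [(hd x hx').deriv]
      exact h x hx' (hneg' x hx)
  have := hmono (left_mem_Icc.mpr htlt.le) (right_mem_Icc.mpr htlt.le) htlt.le
  linarith [ht.2]

/-- Profile of a connecting orbit over the rescaled interval. -/
structure Prof (F G ω : ℝ → ℝ) : Prop where
  cont : ContinuousOn ω (Icc 0 1)
  zero0 : ω 0 = 0
  zero1 : ω 1 = 0
  pos : ∀ s ∈ Ioo (0:ℝ) 1, 0 < ω s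
  der : ∀ s ∈ Ioo (0:ℝ) 1, HasDerivAt ω (F s / ω s + G s) s

theorem Prof.reflect {F G ω : ℝ → ℝ} (h : Prof F G ω) :
    Prof (fun s => - F (1 - s)) (fun s => - G (1 - s)) (fun s => ω (1 - s)) := by
  refine ⟨?_, ?_, ?_, ?_, ?_⟩
  · apply h.cont.comp (by fun_prop)
    intro s hs
    exact ⟨by linarith [hs.2], by linarith [hs.1]⟩
  · simpa using h.zero1
  · simpa using h.zero0
  · intro s hs
    exact h.pos _ ⟨by linarith [hs.2], by linarith [hs.1]⟩
  · intro s hs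
    have h1 := h.der (1 - s) ⟨by linarith [hs.2], by linarith [hs.1]⟩
    have h2 : HasDerivAt (fun s : ℝ => 1 - s) (-1) s := by
      simpa using (hasDerivAt_id s).const_sub 1
    have h3 := h1.comp s h2
    exact h3.congr_deriv (by ring)

theorem Prof.lower_left {F G ω : ℝ → ℝ} (h : Prof F G ω) {d c C ε : ℝ} (hd : d ≤ 1) (hC : 0 ≤ C)
    (hε : 0 < ε) (hF : ∀ s ∈ Ioo 0 d, c * s ≤ F s) (hG : ∀ s ∈ Ioo 0 d, -C ≤ G s)
    (hεC : ε * (C + ε) ≤ c) : ∀ s ∈ Icc 0 d, ε * s ≤ ω s := by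
  have key := bar_lemma (g := fun s => ω s - ε * s) (g' := fun s => F s / ω s + G s - ε * 1)
    (a := 0) (b := d) ?_ ?_ ?_ ?_
  · intro s hs
    have : 0 ≤ ω s - ε * s := key s hs
    linarith
  · apply (h.cont.mono (Icc_subset_Icc_right hd)).sub
    fun_prop
  · simp [h.zero0]
  · intro s hs
    exact (h.der s ⟨hs.1, lt_of_lt_of_le hs.2 hd⟩).sub ((hasDerivAt_id s).const_mul ε)
  · intro s hs hneg
    have hω := h.pos s ⟨hs.1, lt_of_lt_of_le hs.2 hd⟩
    have h1 := hF s hs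
    have h2 := hG s hs
    have h3 : C + ε ≤ F s / ω s := by
      rw [le_div_iff₀ hω]
      have hs0 := hs.1
      have : (C + ε) * ω s ≤ (C + ε) * (ε * s) :=
        mul_le_mul_of_nonneg_left (by linarith) (by linarith)
      nlinarith
    linarith

theorem le_four_mul {x C s : ℝ} (hs : s ∈ Icc (0:ℝ) 1) (h1 : x ≤ C * s)
    (h2 : x ≤ C * (1 - s)) : x ≤ 2 * C * (s * (1 - s)) := by
  have h3 := mul_le_mul_of_nonneg_left h1 (sub_nonneg.mpr hs.2)
  have h4 := mul_le_mul_of_nonneg_left h2 hs.1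
  nlinarith

/-- supremum bound, left part -/
theorem sup_left {F G ω Ft Gt ωt : ℝ → ℝ} (h : Prof F G ω) (ht : Prof Ft Gt ωt) {s0 r : ℝ}
    (hs0 : s0 ≤ 1) (hr : 0 ≤ r) (hF : ∀ s ∈ Ioo 0 s0, 0 ≤ Ft s)
    (hR : ∀ s ∈ Ioo (0:ℝ) 1, |(Ft s - F s) / ω s + (Gt s - G s)| ≤ r) :
    ∀ s ∈ Icc 0 s0, |ωt s - ω s| ≤ r := by
  have hder : ∀ s ∈ Ioo 0 s0, HasDerivAt (fun s => ωt s - ω s)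
      (-(Ft s / (ω s * ωt s)) * (ωt s - ω s) + ((Ft s - F s) / ω s + (Gt s - G s))) s := by
    intro s hs
    have hs' : s ∈ Ioo (0:ℝ) 1 := ⟨hs.1, lt_of_lt_of_le hs.2 hs0⟩
    have h1 := h.pos s hs'
    have h2 := ht.pos s hs'
    refine ((ht.der s hs').sub (h.der s hs')).congr_deriv ?_
    field_simp
    ring
  have hcont : ContinuousOn (fun s => ωt s - ω s) (Icc 0 s0) :=
    (ht.cont.sub h.cont).mono (Icc_subset_Icc_right hs0)
  have up := bar_lemma (g := fun s => r * s - (ωt s - ω s)) (a := 0) (b := s0)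
    (g' := fun s => r * 1 - (-(Ft s / (ω s * ωt s)) * (ωt s - ω s) +
      ((Ft s - F s) / ω s + (Gt s - G s)))) ?_ ?_ ?_ ?_
  have lo := bar_lemma (g := fun s => r * s + (ωt s - ω s)) (a := 0) (b := s0)
    (g' := fun s => r * 1 + (-(Ft s / (ω s * ωt s)) * (ωt s - ω s) +
      ((Ft s - F s) / ω s + (Gt s - G s)))) ?_ ?_ ?_ ?_
  · intro s hs
    have a1 : 0 ≤ r * s - (ωt s - ω s) := up s hs
    have a2 : 0 ≤ r * s + (ωt s - ω s) := lo s hs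
    have : r * s ≤ r := by
      have := hs.2
      nlinarith
    rw [abs_le]
    constructor <;> linarith
  · exact (by fun_prop : ContinuousOn (fun s : ℝ => r * s) (Icc 0 s0)).add hcont
  · simp [h.zero0, ht.zero0]
  · intro s hs
    exact ((hasDerivAt_id s).const_mul r).add (hder s hs)
  · intro s hs hneg
    have hs' : s ∈ Ioo (0:ℝ) 1 := ⟨hs.1, lt_of_lt_of_le hs.2 hs0⟩
    have h1 := h.pos s hs'
    have h2 := ht.pos s hs'
    have h3 : 0 ≤ Ft s / (ω s * ωt s) := div_nonneg (hF s hs) (by positivity)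
    have h4 : ωt s - ω s ≤ 0 := by
      have : 0 ≤ r * s := mul_nonneg hr hs.1.le
      linarith
    have h5 := (abs_le.mp (hR s hs')).1
    nlinarith
  · exact (by fun_prop : ContinuousOn (fun s : ℝ => r * s) (Icc 0 s0)).sub hcont
  · simp [h.zero0, ht.zero0]
  · intro s hs
    exact ((hasDerivAt_id s).const_mul r).sub (hder s hs)
  · intro s hs hneg
    have hs' : s ∈ Ioo (0:ℝ) 1 := ⟨hs.1, lt_of_lt_of_le hs.2 hs0⟩
    have h1 := h.pos s hs'
    have h2 := ht.pos s hs'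
    have h3 : 0 ≤ Ft s / (ω s * ωt s) := div_nonneg (hF s hs) (by positivity)
    have h4 : 0 ≤ ωt s - ω s := by
      have : 0 ≤ r * s := mul_nonneg hr hs.1.le
      linarith
    have h5 := (abs_le.mp (hR s hs')).2
    nlinarith

theorem sup_bound {F G ω Ft Gt ωt : ℝ → ℝ} (h : Prof F G ω) (ht : Prof Ft Gt ωt) {s0 r : ℝ}
    (hs0 : s0 ∈ Ioo (0:ℝ) 1) (hr : 0 ≤ r) (hF : ∀ s ∈ Ioo 0 s0, 0 ≤ Ft s)
    (hF' : ∀ s ∈ Ioo s0 1, Ft s ≤ 0)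
    (hR : ∀ s ∈ Ioo (0:ℝ) 1, |(Ft s - F s) / ω s + (Gt s - G s)| ≤ r) :
    ∀ s ∈ Icc (0:ℝ) 1, |ωt s - ω s| ≤ r := by
  intro s hs
  rcases le_total s s0 with h1 | h1
  · exact sup_left h ht hs0.2.le hr hF hR s ⟨hs.1, h1⟩
  · have := sup_left h.reflect ht.reflect (s0 := 1 - s0) (r := r) (by linarith [hs0.1]) hr
      ?_ ?_ (1 - s) ⟨by linarith [hs.2], by linarith⟩
    · simpa using this
    · intro x hx
      have := hF' (1 - x) ⟨by linarith [hx.2], by linarith [hx.1]⟩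
      linarith
    · intro x hx
      have := hR (1 - x) ⟨by linarith [hx.2], by linarith [hx.1]⟩
      rw [← abs_neg] at this
      convert this using 2
      ring

/-- the integrating factor -/
noncomputable def EE (J : ℝ → ℝ) (s : ℝ) : ℝ := Real.exp (∫ x in (1/2 : ℝ)..s, J x)

theorem EE_pos (J : ℝ → ℝ) (s : ℝ) : 0 < EE J s := Real.exp_pos _

theorem uIcc_half_subset {s : ℝ} (hs : s ∈ Ioo (0:ℝ) 1) : uIcc (1/2 : ℝ) s ⊆ Ioo 0 1 := by
  intro x hx
  rw [mem_uIcc] at hx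
  obtain ⟨h1, h2⟩ := hs
  rcases hx with hx | hx <;> constructor <;> linarith [hx.1, hx.2]

theorem EE_hasDeriv {J : ℝ → ℝ} (hJ : ContinuousOn J (Ioo 0 1)) {s : ℝ} (hs : s ∈ Ioo (0:ℝ) 1) :
    HasDerivAt (EE J) (EE J s * J s) s := by
  have h1 : HasDerivAt (fun s => ∫ x in (1/2 : ℝ)..s, J x) (J s) s := by
    apply intervalIntegral.integral_hasDerivAt_right
    · exact (hJ.mono (uIcc_half_subset hs)).intervalIntegrable
    · exact hJ.stronglyMeasurableAtFilter isOpen_Ioo s hs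
    · exact hJ.continuousAt (isOpen_Ioo.mem_nhds hs)
  exact h1.exp

theorem EE_contOn {J : ℝ → ℝ} (hJ : ContinuousOn J (Ioo 0 1)) : ContinuousOn (EE J) (Ioo 0 1) :=
  fun _ hs => (EE_hasDeriv hJ hs).continuousAt.continuousWithinAt

/-- if `J ≥ 0` on `(0,a)`, `|J| ≤ M` on `[a,b]`, `J ≤ 0` on `(b,1)` then `EE J ≤ exp M`. -/
theorem EE_bound {J : ℝ → ℝ} (hJ : ContinuousOn J (Ioo 0 1)) {a b M : ℝ}
    (ha : 0 < a) (hb : b < 1) (ha' : a ≤ 1/2) (hb' : 1/2 ≤ b)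
    (h1 : ∀ s ∈ Ioo 0 a, 0 ≤ J s) (h2 : ∀ s ∈ Ioo b 1, J s ≤ 0)
    (h3 : ∀ s ∈ Icc a b, |J s| ≤ M) : ∀ s ∈ Ioo (0:ℝ) 1, EE J s ≤ Real.exp M := by
  have hM : 0 ≤ M := le_trans (abs_nonneg _) (h3 a ⟨le_refl _, by linarith⟩)
  have hmid : ∀ x ∈ Icc a b, ∫ t in (1/2:ℝ)..x, J t ≤ M := by
    intro x hx
    have := intervalIntegral.norm_integral_le_of_norm_le_const (a := 1/2) (b := x) (C := M) (f := J)
      (by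
        intro t ht
        rw [mem_uIoc] at ht
        apply h3
        rcases ht with ht | ht
        · exact ⟨by linarith [ht.1], by linarith [ht.2, hx.2]⟩
        · exact ⟨by linarith [ht.1, hx.1], by linarith [ht.2]⟩)
    have h5 : |x - 1/2| ≤ 1 := by
      rw [abs_le]; constructor <;> linarith [hx.1, hx.2]
    have h6 : M * |x - 1/2| ≤ M := by nlinarith
    have := le_trans (le_trans (le_abs_self _) this) h6
    exact this
  have hmid' : ∀ x ∈ Icc a b, EE J x ≤ Real.exp M := fun x hx =>
    Real.exp_le_exp.mpr (hmid x hx)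
  intro s hs
  by_cases hsa : s < a
  · have := bar_lemma (g := fun x => EE J x - EE J s) (g' := fun x => EE J x * J x) (a := s) (b := a)
      ?_ ?_ ?_ ?_ a ⟨hsa.le, le_refl _⟩
    · have h5 : 0 ≤ EE J a - EE J s := this
      linarith [hmid' a ⟨le_refl _, by linarith⟩]
    · apply ContinuousOn.sub _ continuousOn_const
      apply (EE_contOn hJ).mono
      intro x hx
      exact ⟨lt_of_lt_of_le hs.1 hx.1, by linarith [hx.2]⟩
    · simp
    · intro x hx
      exact (EE_hasDeriv hJ ⟨lt_trans hs.1 hx.1, by linarith [hx.2]⟩).sub_const _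
    · intro x hx _
      exact mul_nonneg (EE_pos _ _).le (h1 x ⟨lt_trans hs.1 hx.1, hx.2⟩)
  · by_cases hsb : b < s
    · have := bar_lemma (g := fun x => EE J b - EE J x) (g' := fun x => -(EE J x * J x))
        (a := b) (b := s) ?_ ?_ ?_ ?_ s ⟨hsb.le, le_refl _⟩
      · have h5 : 0 ≤ EE J b - EE J s := this
        linarith [hmid' b ⟨by linarith, le_refl _⟩]
      · apply ContinuousOn.sub continuousOn_const
        apply (EE_contOn hJ).mono
        intro x hx
        exact ⟨by linarith [hx.1], lt_of_le_of_lt hx.2 hs.2⟩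
      · simp
      · intro x hx
        exact (EE_hasDeriv hJ ⟨by linarith [hx.1], lt_trans hx.2 hs.2⟩).const_sub _
      · intro x hx _
        have := mul_nonneg (EE_pos J x).le (neg_nonneg.mpr (h2 x ⟨hx.1, lt_trans hx.2 hs.2⟩))
        linarith
    · exact hmid' s ⟨by linarith, by linarith⟩

/-- bounded continuous functions on `(0,1)` are integrable -/
theorem integrable_bdd {f : ℝ → ℝ} (hf : ContinuousOn f (Ioo 0 1)) {M : ℝ}
    (hM : ∀ s ∈ Ioo (0:ℝ) 1, |f s| ≤ M) : IntegrableOn f (Ioo 0 1) := by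
  have hfin : IsFiniteMeasure (volume.restrict (Ioo (0:ℝ) 1)) := ⟨by simp⟩
  refine Integrable.of_bound (hf.aestronglyMeasurable measurableSet_Ioo) M ?_
  rw [ae_restrict_iff' measurableSet_Ioo]
  exact Eventually.of_forall hM

theorem Prof.contOn {F G ω : ℝ → ℝ} (h : Prof F G ω) : ContinuousOn ω (Ioo 0 1) :=
  h.cont.mono Ioo_subset_Icc_self

/-- exact Melnikov identity -/
theorem melnikov {F G ω Ft Gt ωt : ℝ → ℝ} (h : Prof F G ω) (ht : Prof Ft Gt ωt) {s0 r : ℝ}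
    (hs0 : s0 ∈ Ioo (0:ℝ) 1) (hF : ∀ s ∈ Ioo 0 s0, 0 ≤ Ft s)
    (hF' : ∀ s ∈ Ioo s0 1, Ft s ≤ 0)
    (cF : ContinuousOn F (Icc 0 1)) (cG : ContinuousOn G (Icc 0 1))
    (cFt : ContinuousOn Ft (Icc 0 1)) (cGt : ContinuousOn Gt (Icc 0 1))
    (hR : ∀ s ∈ Ioo (0:ℝ) 1, |(Ft s - F s) / ω s + (Gt s - G s)| ≤ r) :
    ∃ M, (∀ s ∈ Ioo (0:ℝ) 1, EE (fun s => Ft s / (ω s * ωt s)) s ≤ M) ∧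
    ∫ s in Ioo (0:ℝ) 1, EE (fun s => Ft s / (ω s * ωt s)) s *
      ((Ft s - F s) / ω s + (Gt s - G s)) = 0 := by
  set J : ℝ → ℝ := fun s => Ft s / (ω s * ωt s) with hJdef
  have sub := Ioo_subset_Icc_self (a := (0:ℝ)) (b := 1)
  have hJ : ContinuousOn J (Ioo 0 1) := by
    apply (cFt.mono sub).div (h.contOn.mul ht.contOn)
    intro s hs
    exact (mul_pos (h.pos s hs) (ht.pos s hs)).ne'
  have cR : ContinuousOn (fun s => (Ft s - F s) / ω s + (Gt s - G s)) (Ioo 0 1) := by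
    apply ContinuousOn.add
    · apply ((cFt.mono sub).sub (cF.mono sub)).div h.contOn
      intro s hs
      exact (h.pos s hs).ne'
    · exact (cGt.mono sub).sub (cG.mono sub)
  have hEbd : ∃ M, ∀ s ∈ Ioo (0:ℝ) 1, EE J s ≤ M := by
    set a := min s0 (1/2) with ha
    set b := max s0 (1/2) with hb
    have ha0 : 0 < a := lt_min hs0.1 (by norm_num)
    have hb1 : b < 1 := max_lt hs0.2 (by norm_num)
    obtain ⟨M, hM⟩ := (isCompact_Icc (a := a) (b := b)).exists_bound_of_continuousOn
      (hJ.mono (fun x hx => ⟨lt_of_lt_of_le ha0 hx.1, lt_of_le_of_lt hx.2 hb1⟩))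
    refine ⟨Real.exp M, EE_bound hJ ha0 hb1 (min_le_right _ _) (le_max_right _ _) ?_ ?_ hM⟩
    · intro s hs
      have hs' : s ∈ Ioo (0:ℝ) 1 := ⟨hs.1, by
        have := lt_of_lt_of_le hs.2 (min_le_right _ _); linarith⟩
      exact div_nonneg (hF s ⟨hs.1, lt_of_lt_of_le hs.2 (min_le_left _ _)⟩)
        (mul_pos (h.pos s hs') (ht.pos s hs')).le
    · intro s hs
      have hs' : s ∈ Ioo (0:ℝ) 1 := ⟨by
        have := lt_of_le_of_lt (le_max_right _ _) hs.1; linarith, hs.2⟩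
      exact div_nonpos_of_nonpos_of_nonneg (hF' s ⟨lt_of_le_of_lt (le_max_left _ _) hs.1, hs.2⟩)
        (mul_pos (h.pos s hs') (ht.pos s hs')).le
  obtain ⟨M, hM⟩ := hEbd
  refine ⟨M, hM, ?_⟩
  have hint : IntegrableOn (fun s => EE J s * ((Ft s - F s) / ω s + (Gt s - G s))) (Ioo 0 1) := by
    apply integrable_bdd ((EE_contOn hJ).mul cR) (M := M * r)
    intro s hs
    rw [Pi.mul_apply, abs_mul, abs_of_pos (EE_pos _ _)]
    have h1 := hM s hs
    have h2 := EE_pos J s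
    exact mul_le_mul h1 (hR s hs) (abs_nonneg _) (by linarith)
  have hder : ∀ s ∈ Ioo (0:ℝ) 1, HasDerivAt (fun s => EE J s * (ωt s - ω s))
      (EE J s * ((Ft s - F s) / ω s + (Gt s - G s))) s := by
    intro s hs
    have h1 := h.pos s hs
    have h2 := ht.pos s hs
    refine ((EE_hasDeriv hJ hs).mul ((ht.der s hs).sub (h.der s hs))).congr_deriv ?_
    simp only [hJdef, Pi.sub_apply]
    field_simp
    ring
  have hlim : ∀ (l : Filter ℝ) (x : ℝ), l ≤ 𝓝[Icc (0:ℝ) 1] x → x ∈ Icc (0:ℝ) 1 → ωt x = 0 → ω x = 0 →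
      Ioo (0:ℝ) 1 ∈ l → Tendsto (fun s => EE J s * (ωt s - ω s)) l (𝓝 0) := by
    intro l x hl hx h1 h2 hI
    have t1 : Tendsto (fun s => ωt s - ω s) l (𝓝 0) := by
      have := ((ht.cont x hx).tendsto.mono_left hl).sub ((h.cont x hx).tendsto.mono_left hl)
      simpa [h1, h2] using this
    apply squeeze_zero_norm' (a := fun s => M * |ωt s - ω s|)
    · filter_upwards [hI] with s hs
      rw [Real.norm_eq_abs, abs_mul, abs_of_pos (EE_pos _ _)]
      exact mul_le_mul_of_nonneg_right (hM s hs) (abs_nonneg _)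
    · have := (t1.abs).const_mul M
      simpa using this
  have key := intervalIntegral.integral_eq_sub_of_hasDerivAt_of_tendsto (a := (0:ℝ)) (b := 1)
    (fa := (0:ℝ)) (fb := 0) (by norm_num) hder ?_ ?_ ?_
  · rw [intervalIntegral.integral_of_le (by norm_num), integral_Ioc_eq_integral_Ioo] at key
    simpa using key
  · rw [intervalIntegrable_iff_integrableOn_Ioo_of_le (by norm_num)]
    exact hint
  · apply hlim _ 0 _ (by simp) ht.zero0 h.zero0
    · exact Ioo_mem_nhdsGT (by norm_num)
    · rw [← nhdsWithin_Ioo_eq_nhdsGT (show (0:ℝ) < 1 by norm_num)]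
      exact nhdsWithin_mono _ sub
  · apply hlim _ 1 _ (by simp) ht.zero1 h.zero1
    · exact Ioo_mem_nhdsLT (by norm_num)
    · rw [← nhdsWithin_Ioo_eq_nhdsLT (show (0:ℝ) < 1 by norm_num)]
      exact nhdsWithin_mono _ sub

end

section

/-- Data of a rescaled connection problem. -/
structure Dat where
  F : ℝ → ℝ
  A : ℝ → ℝ
  B : ℝ → ℝ
  ω : ℝ → ℝ
  m : ℝ

structure Good (d : Dat) : Prop where
  prof : Prof d.F (fun s => d.A s + d.m * d.B s) d.ω
  cF : ContinuousOn d.F (Icc 0 1)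
  cA : ContinuousOn d.A (Icc 0 1)
  cB : ContinuousOn d.B (Icc 0 1)
  sgn : ∃ s0 ∈ Ioo (0:ℝ) 1, (∀ s ∈ Ioo 0 s0, 0 ≤ d.F s) ∧ (∀ s ∈ Ioo s0 1, d.F s ≤ 0)
  Bpos : ∀ s ∈ Icc (0:ℝ) 1, 0 < d.B s
  ends : ∃ c > 0, ∃ e > 0, e ≤ 1/2 ∧ ∀ s ∈ Ioo 0 e, c * s ≤ d.F s ∧ c * s ≤ - d.F (1 - s)

theorem Good.cG {d : Dat} (h : Good d) : ContinuousOn (fun s => d.A s + d.m * d.B s) (Icc 0 1) :=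
  h.cA.add (h.cB.const_smul d.m)

def Close (ε : ℝ) (d d' : Dat) : Prop :=
  ∀ s ∈ Icc (0:ℝ) 1, |d.F s - d'.F s| ≤ ε * (s * (1 - s)) ∧ |d.A s - d'.A s| ≤ ε ∧
    |d.B s - d'.B s| ≤ ε

theorem Close.nonneg {ε : ℝ} {d d' : Dat} (h : Close ε d d') : 0 ≤ ε :=
  le_trans (abs_nonneg _) (h 0 (by simp)).2.1

theorem lower_gen {F G ω : ℝ → ℝ} (h : Prof F G ω) {c e C η : ℝ} (hc : 0 < c) 
    (he' : e ≤ 1/2) (hC : 0 ≤ C) (hη : 0 < η)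
    (hF : ∀ s ∈ Ioo 0 e, c * s ≤ F s ∧ c * s ≤ - F (1 - s))
    (hG : ∀ s ∈ Icc (0:ℝ) 1, |G s| ≤ C) (hω : ∀ s ∈ Icc e (1 - e), η ≤ ω s) :
    ∀ s ∈ Icc (0:ℝ) 1, min (min 1 (c / (C + 1))) η * (s * (1 - s)) ≤ ω s := by
  set ε := min 1 (c / (C + 1)) with hεdef
  have hε : 0 < ε := lt_min one_pos (by positivity)
  have hεC : ε * (C + ε) ≤ c := by
    have h1 : ε ≤ 1 := min_le_left _ _
    have h2 : ε ≤ c / (C + 1) := min_le_right _ _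
    rw [le_div_iff₀ (by positivity)] at h2
    nlinarith
  have hl := h.lower_left (d := e) (c := c) (C := C) (ε := ε) (by linarith) hC hε
    (fun s hs => (hF s hs).1)
    (fun s hs => (abs_le.mp (hG s ⟨hs.1.le, by linarith [hs.2]⟩)).1) hεC
  have hr := h.reflect.lower_left (d := e) (c := c) (C := C) (ε := ε) (by linarith) hC hε
    (fun s hs => (hF s hs).2)
    (fun s hs => by
      have := (abs_le.mp (hG (1 - s) ⟨by linarith [hs.2], by linarith [hs.1]⟩)).2
      linarith) hεC
  intro s hs
  have hs0 := hs.1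
  have hs1 : 0 ≤ 1 - s := by linarith [hs.2]
  have hp : 0 ≤ s * (1 - s) := mul_nonneg hs0 hs1
  have m1 : min ε η ≤ ε := min_le_left _ _
  have m2 : min ε η ≤ η := min_le_right _ _
  have m0 : 0 < min ε η := lt_min hε hη
  rcases le_total s e with h1 | h1
  · have h2 := hl s ⟨hs0, h1⟩
    calc min ε η * (s * (1 - s)) ≤ ε * (s * (1-s)) := mul_le_mul_of_nonneg_right m1 hp
      _ ≤ ε * s := mul_le_mul_of_nonneg_left (by nlinarith) hε.le
      _ ≤ _ := h2
  · rcases le_total s (1 - e) with h3 | h3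
    · have h2 := hω s ⟨h1, h3⟩
      calc min ε η * (s * (1 - s)) ≤ η * (s * (1-s)) := mul_le_mul_of_nonneg_right m2 hp
        _ ≤ η := mul_le_of_le_one_right hη.le (by nlinarith)
        _ ≤ _ := h2
    · have h2 := hr (1 - s) ⟨hs1, by linarith⟩
      simp only [sub_sub_cancel] at h2
      calc min ε η * (s * (1 - s)) ≤ ε * (s * (1-s)) := mul_le_mul_of_nonneg_right m1 hp
        _ ≤ ε * (1 - s) := mul_le_mul_of_nonneg_left (by nlinarith) hε.le
        _ ≤ _ := h2

theorem bdd_of_cont {f : ℝ → ℝ} (hf : ContinuousOn f (Icc 0 1)) :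
    ∃ C, 0 ≤ C ∧ ∀ s ∈ Icc (0:ℝ) 1, |f s| ≤ C := by
  obtain ⟨C, hC⟩ := (isCompact_Icc (a := (0:ℝ)) (b := 1)).exists_bound_of_continuousOn hf
  exact ⟨C, le_trans (norm_nonneg _) (hC 0 (by simp)), hC⟩

theorem low_of_cont {f : ℝ → ℝ} {a b : ℝ} (hab : a ≤ b) (hf : ContinuousOn f (Icc a b))
    (hp : ∀ s ∈ Icc a b, 0 < f s) : ∃ η > 0, ∀ s ∈ Icc a b, η ≤ f s := by
  obtain ⟨x, hx, hm⟩ := (isCompact_Icc (a := a) (b := b)).exists_isMinOn (nonempty_Icc.mpr hab) hf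
  exact ⟨f x, hp x hx, fun s hs => hm hs⟩

theorem Good.low_mid {d : Dat} (h : Good d) {e : ℝ} (he : 0 < e) (he' : e ≤ 1/2) :
    ∃ η > 0, ∀ s ∈ Icc e (1 - e), η ≤ d.ω s := by
  apply low_of_cont (by linarith)
  · exact h.prof.cont.mono (Icc_subset_Icc he.le (by linarith))
  · intro s hs
    exact h.prof.pos s ⟨by linarith [hs.1], by linarith [hs.2]⟩

theorem Good.lower {d : Dat} (h : Good d) : ∃ c > 0, ∀ s ∈ Icc (0:ℝ) 1, c * (s * (1 - s)) ≤ d.ω s := by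
  obtain ⟨c, hc, e, he, he', hF⟩ := h.ends
  obtain ⟨C, hC, hG⟩ := bdd_of_cont h.cG
  obtain ⟨η, hη, hω⟩ := h.low_mid he he'
  exact ⟨_, lt_min (lt_min one_pos (by positivity)) hη, lower_gen h.prof hc he' hC hη hF hG hω⟩

theorem int_pos {f : ℝ → ℝ} (hf : IntegrableOn f (Ioo 0 1)) (hp : ∀ s ∈ Ioo (0:ℝ) 1, 0 < f s) :
    0 < ∫ s in Ioo (0:ℝ) 1, f s := by
  rw [setIntegral_pos_iff_support_of_nonneg_ae]
  · have : Function.support f ∩ Ioo 0 1 = Ioo (0:ℝ) 1 := by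
      apply inter_eq_right.mpr
      intro s hs
      exact (hp s hs).ne'
    rw [this]; simp
  · exact (ae_restrict_iff' measurableSet_Ioo).mpr (Eventually.of_forall fun s hs => (hp s hs).le)
  · exact hf

theorem stab {d0 : Dat} (h0 : Good d0) : ∃ C ≥ 0, ∃ ε0 > 0, ∀ d ε, Good d → ε ≤ ε0 →
    Close ε d d0 → |d.m - d0.m| ≤ C * ε ∧ ∀ s ∈ Icc (0:ℝ) 1, |d.ω s - d0.ω s| ≤ C * ε := by
  obtain ⟨c, hc, hlow⟩ := h0.lower
  obtain ⟨b, hb, hB⟩ := low_of_cont zero_le_one h0.cB h0.Bpos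
  obtain ⟨β, hβ, hB'⟩ := bdd_of_cont h0.cB
  set q := 1 / c + 1 + |d0.m| with hq
  have hq0 : 0 < q := by positivity
  refine ⟨q * (2 / b) + (q + q * (2 / b) * (β + b / 2)), by positivity, b / 2, by positivity, ?_⟩
  intro d ε hd hε hcl
  have hε0 := hcl.nonneg
  have hR1 : ∀ s ∈ Ioo (0:ℝ) 1, |(d.F s - d0.F s) / d0.ω s + (d.A s - d0.A s) +
      d0.m * (d.B s - d0.B s)| ≤ q * ε := by
    intro s hs
    have hs' : s ∈ Icc (0:ℝ) 1 := Ioo_subset_Icc_self hs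
    obtain ⟨c1, c2, c3⟩ := hcl s hs'
    have hp : 0 < s * (1 - s) := mul_pos hs.1 (by linarith [hs.2])
    have e1 : |(d.F s - d0.F s) / d0.ω s| ≤ ε * (1 / c) := by
      rw [abs_div, abs_of_pos (h0.prof.pos s hs), div_le_iff₀ (h0.prof.pos s hs)]
      have := hlow s hs'
      calc _ ≤ ε * (s * (1 - s)) := c1
        _ = ε * (1 / c) * (c * (s * (1 - s))) := by field_simp
        _ ≤ _ := mul_le_mul_of_nonneg_left this (by positivity)
    have e2 : |d0.m * (d.B s - d0.B s)| ≤ |d0.m| * ε := by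
      rw [abs_mul]
      exact mul_le_mul_of_nonneg_left c3 (abs_nonneg _)
    calc _ ≤ |(d.F s - d0.F s) / d0.ω s| + |d.A s - d0.A s| + |d0.m * (d.B s - d0.B s)| :=
          abs_add_three _ _ _
      _ ≤ q * ε := by rw [hq]; linarith
  have hBl : ∀ s ∈ Icc (0:ℝ) 1, b / 2 ≤ d.B s := by
    intro s hs
    have := (abs_le.mp (hcl s hs).2.2).1
    linarith [hB s hs]
  have hBu : ∀ s ∈ Icc (0:ℝ) 1, |d.B s| ≤ β + b / 2 := by
    intro s hs
    have h1 := (abs_le.mp (hcl s hs).2.2)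
    have h2 := abs_le.mp (hB' s hs)
    rw [abs_le]
    constructor <;> linarith
  have hReq : ∀ s, (d.F s - d0.F s) / d0.ω s + ((d.A s + d.m * d.B s) - (d0.A s + d0.m * d0.B s)) =
      ((d.F s - d0.F s) / d0.ω s + (d.A s - d0.A s) + d0.m * (d.B s - d0.B s)) +
      (d.m - d0.m) * d.B s := by intro s; ring
  have hR : ∀ s ∈ Ioo (0:ℝ) 1, |(d.F s - d0.F s) / d0.ω s +
      ((d.A s + d.m * d.B s) - (d0.A s + d0.m * d0.B s))| ≤ q * ε + |d.m - d0.m| * (β + b / 2) := by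
    intro s hs
    rw [hReq]
    refine (abs_add_le _ _).trans (add_le_add (hR1 s hs) ?_)
    rw [abs_mul]
    exact mul_le_mul_of_nonneg_left (hBu s (Ioo_subset_Icc_self hs)) (abs_nonneg _)
  obtain ⟨s0, hs0, hF, hF'⟩ := hd.sgn
  obtain ⟨M, hM, hint⟩ := melnikov h0.prof hd.prof hs0 hF hF' h0.cF h0.cG hd.cF hd.cG hR
  have hm : |d.m - d0.m| ≤ q * (2 / b) * ε := by
    by_contra hcon
    push Not at hcon
    have hcon' : q * ε < |d.m - d0.m| * (b / 2) := by
      have := mul_lt_mul_of_pos_right hcon (half_pos hb)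
      calc q * ε = q * (2 / b) * ε * (b / 2) := by field_simp
        _ < _ := this
    have hne : d.m - d0.m ≠ 0 := by
      intro h
      rw [h] at hcon'
      simp at hcon'
      nlinarith
    have hpos : ∀ s ∈ Ioo (0:ℝ) 1, 0 < (d.m - d0.m) * (EE (fun s => d.F s / (d0.ω s * d.ω s)) s *
      ((d.F s - d0.F s) / d0.ω s + ((d.A s + d.m * d.B s) - (d0.A s + d0.m * d0.B s)))) := by
      intro s hs
      rw [hReq]
      have h1 := hR1 s hs
      set x := (d.F s - d0.F s) / d0.ω s + (d.A s - d0.A s) + d0.m * (d.B s - d0.B s)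
      have h2 := hBl s (Ioo_subset_Icc_self hs)
      have h3 : 0 < (d.m - d0.m) * (x + (d.m - d0.m) * d.B s) := by
        have h4 : |d.m - d0.m| * |x| < |d.m - d0.m| * (|d.m - d0.m| * (b / 2)) :=
          mul_lt_mul_of_pos_left (lt_of_le_of_lt h1 hcon') (abs_pos.mpr hne)
        have h5 : -(|d.m - d0.m| * |x|) ≤ (d.m - d0.m) * x := by
          rw [← abs_mul]; exact neg_abs_le _
        have h6 : |d.m - d0.m| * |d.m - d0.m| = (d.m - d0.m) * (d.m - d0.m) := abs_mul_abs_self _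
        have h7 : (d.m - d0.m) * (d.m - d0.m) * (b/2) ≤ (d.m - d0.m) * (d.m - d0.m) * d.B s :=
          mul_le_mul_of_nonneg_left h2 (mul_self_nonneg _)
        nlinarith
      have := mul_pos (EE_pos (fun s => d.F s / (d0.ω s * d.ω s)) s) h3
      linarith
    have hint0 : ∫ s in Ioo (0:ℝ) 1, (d.m - d0.m) * (EE (fun s => d.F s / (d0.ω s * d.ω s)) s *
      ((d.F s - d0.F s) / d0.ω s + ((d.A s + d.m * d.B s) - (d0.A s + d0.m * d0.B s)))) = 0 := by
      rw [integral_const_mul, hint, mul_zero]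
    have := int_pos ?_ hpos
    · linarith
    · have sub := Ioo_subset_Icc_self (a := (0:ℝ)) (b := 1)
      refine integrable_bdd (M := |d.m - d0.m| * (M * (q * ε + |d.m - d0.m| * (β + b / 2)))) ?_ ?_
      · apply continuousOn_const.mul
        apply ContinuousOn.mul
        · apply EE_contOn
          apply (hd.cF.mono sub).div (h0.prof.contOn.mul hd.prof.contOn)
          intro s hs
          exact (mul_pos (h0.prof.pos s hs) (hd.prof.pos s hs)).ne'
        · apply ContinuousOn.add
          · apply ((hd.cF.mono sub).sub (h0.cF.mono sub)).div h0.prof.contOn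
            intro s hs
            exact (h0.prof.pos s hs).ne'
          · exact (hd.cG.mono sub).sub (h0.cG.mono sub)
      · intro s hs
        rw [abs_mul, abs_mul, abs_of_pos (EE_pos _ _)]
        apply mul_le_mul_of_nonneg_left _ (abs_nonneg _)
        have h2 := EE_pos (fun s => d.F s / (d0.ω s * d.ω s)) s
        exact mul_le_mul (hM s hs) (hR s hs) (abs_nonneg _) (le_trans h2.le (hM s hs))
  have hsup := sup_bound h0.prof hd.prof hs0 (by positivity) hF hF' hR
  have p1 : 0 ≤ q * (2 / b) * ε := by positivity
  have p2 : 0 ≤ (q + q * (2 / b) * (β + b / 2)) * ε := by positivity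
  constructor
  · linarith
  · intro s hs
    refine (hsup s hs).trans ?_
    have : |d.m - d0.m| * (β + b / 2) ≤ q * (2 / b) * ε * (β + b / 2) :=
      mul_le_mul_of_nonneg_right hm (by positivity)
    linarith

/-- locally uniform lower bound near the base problem -/
theorem lower_unif {d0 : Dat} (h0 : Good d0) : ∃ k > 0, ∃ ε0 > 0, ∀ d ε, Good d → ε ≤ ε0 →
    Close ε d d0 → ∀ s ∈ Icc (0:ℝ) 1, k * (s * (1 - s)) ≤ d.ω s := by
  obtain ⟨C, hC, ε1, hε1, hst⟩ := stab h0
  obtain ⟨c, hc, e, he, he', hF⟩ := h0.ends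
  obtain ⟨η, hη, hω⟩ := h0.low_mid he he'
  obtain ⟨α, hα, hA⟩ := bdd_of_cont h0.cA
  obtain ⟨β, hβ, hB⟩ := bdd_of_cont h0.cB
  refine ⟨min (min 1 ((c / 2) / ((α + 1 + (|d0.m| + 1) * (β + 1)) + 1))) (η / 2),
    lt_min (lt_min one_pos (by positivity)) (by positivity),
    min (min ε1 1) (min (c / 2) (min (η / 2 / (C + 1)) (1 / (C + 1)))), by positivity, ?_⟩
  intro d ε hd hε hcl
  have hε0 := hcl.nonneg
  simp only [le_min_iff] at hε
  obtain ⟨⟨e1, e2⟩, e3, e4, e5⟩ := hε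
  rw [le_div_iff₀ (by positivity)] at e4 e5
  obtain ⟨g1, g2⟩ := hst d ε hd e1 hcl
  apply lower_gen hd.prof (by positivity) he' (by positivity) (by positivity)
  · intro s hs
    have hs' : s ∈ Icc (0:ℝ) 1 := ⟨hs.1.le, by linarith [hs.2]⟩
    have hs'' : 1 - s ∈ Icc (0:ℝ) 1 := ⟨by linarith [hs.2], by linarith [hs.1]⟩
    have a1 := (abs_le.mp (hcl s hs').1).1
    have a2 := (abs_le.mp (hcl (1 - s) hs'').1).2
    have a3 := hF s hs
    have hs0 := hs.1
    have a4 : ε * (s * (1 - s)) ≤ (c / 2) * s := by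
      apply mul_le_mul e3 _ (mul_nonneg hs0.le hs''.1) (by positivity)
      nlinarith
    constructor
    · linarith
    · have : ε * ((1 - s) * (1 - (1 - s))) = ε * (s * (1 - s)) := by ring
      linarith
  · intro s hs
    have a1 := abs_le.mp (hcl s hs).2.1
    have a2 := abs_le.mp (hcl s hs).2.2
    have a3 := abs_le.mp (hA s hs)
    have a4 := abs_le.mp (hB s hs)
    have b1 : |d.A s| ≤ α + 1 := by rw [abs_le]; constructor <;> linarith
    have b2 : |d.B s| ≤ β + 1 := by rw [abs_le]; constructor <;> linarith
    have b3 : |d.m| ≤ |d0.m| + 1 := by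
      have := abs_sub_abs_le_abs_sub d.m d0.m
      nlinarith
    refine (abs_add_le _ _).trans (add_le_add b1 ?_)
    rw [abs_mul]
    exact mul_le_mul b3 b2 (abs_nonneg _) (by positivity)
  · intro s hs
    have hs' : s ∈ Icc (0:ℝ) 1 := ⟨by linarith [hs.1], by linarith [hs.2]⟩
    have a1 := (abs_le.mp (g2 s hs')).1
    have a2 := hω s hs
    nlinarith

end

section

theorem main_limit {ι : Type*} {l : Filter ι} [l.IsCountablyGenerated] {d0 : Dat} (h0 : Good d0)
    {d dt : ι → Dat} {δ ε : ι → ℝ} {C : ℝ} {F' A' B' : ℝ → ℝ}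
    (hd : ∀ᶠ i in l, Good (d i)) (hdt : ∀ᶠ i in l, Good (dt i))
    (hε : Tendsto ε l (𝓝 0)) (hδ : ∀ᶠ i in l, δ i ≠ 0)
    (hcl : ∀ᶠ i in l, Close (ε i) (d i) d0) (hclt : ∀ᶠ i in l, Close (ε i) (dt i) d0)
    (hlip : ∀ᶠ i in l, Close (C * |δ i|) (dt i) (d i))
    (lF : ∀ s ∈ Ioo (0:ℝ) 1, Tendsto (fun i => ((dt i).F s - (d i).F s) / δ i) l (𝓝 (F' s)))
    (lA : ∀ s ∈ Ioo (0:ℝ) 1, Tendsto (fun i => ((dt i).A s - (d i).A s) / δ i) l (𝓝 (A' s)))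
    (lB : ∀ s ∈ Ioo (0:ℝ) 1, Tendsto (fun i => ((dt i).B s - (d i).B s) / δ i) l (𝓝 (B' s))) :
    ∃ a, Tendsto (fun i => ((dt i).m - (d i).m) / δ i) l (𝓝 a) := by
  rcases l.eq_or_neBot with hbot | hne
  · exact ⟨0, by rw [hbot]; exact tendsto_bot⟩
  have sub := Ioo_subset_Icc_self (a := (0:ℝ)) (b := 1)
  have hC : 0 ≤ C := by
    obtain ⟨i, h1, h2⟩ := (hlip.and hδ).exists
    have h3 := h1.nonneg
    exact nonneg_of_mul_nonneg_left h3 (abs_pos.mpr h2)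
  obtain ⟨Cs, hCs, ε1, hε1, hst⟩ := stab h0
  obtain ⟨k, hk, ε2, hε2, hlow⟩ := lower_unif h0
  obtain ⟨c, hc, e, he, he', hends⟩ := h0.ends
  obtain ⟨Φ, hΦ, hFb⟩ := bdd_of_cont h0.cF
  obtain ⟨β, hβ, hBb⟩ := bdd_of_cont h0.cB
  have small : ∀ x > 0, ∀ᶠ i in l, ε i ≤ x := fun x hx =>
    (hε.eventually (gt_mem_nhds hx)).mono fun i hi => le_of_lt hi
  have hCε : Tendsto (fun i => Cs * ε i) l (𝓝 0) := by simpa using hε.const_mul Cs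
  -- convergence of speeds and profiles
  have lm : Tendsto (fun i => (d i).m) l (𝓝 d0.m) := by
    rw [tendsto_iff_norm_sub_tendsto_zero]
    apply squeeze_zero' (Eventually.of_forall fun i => norm_nonneg _) _ hCε
    filter_upwards [hd, hcl, small ε1 hε1] with i a1 a2 a3
    exact (hst _ _ a1 a3 a2).1
  have lω : ∀ s ∈ Icc (0:ℝ) 1, Tendsto (fun i => (d i).ω s) l (𝓝 (d0.ω s)) := by
    intro s hs
    rw [tendsto_iff_norm_sub_tendsto_zero]
    apply squeeze_zero' (Eventually.of_forall fun i => norm_nonneg _) _ hCε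
    filter_upwards [hd, hcl, small ε1 hε1] with i a1 a2 a3
    exact (hst _ _ a1 a3 a2).2 s hs
  have lωt : ∀ s ∈ Icc (0:ℝ) 1, Tendsto (fun i => (dt i).ω s) l (𝓝 (d0.ω s)) := by
    intro s hs
    rw [tendsto_iff_norm_sub_tendsto_zero]
    apply squeeze_zero' (Eventually.of_forall fun i => norm_nonneg _) _ hCε
    filter_upwards [hdt, hclt, small ε1 hε1] with i a1 a2 a3
    exact (hst _ _ a1 a3 a2).2 s hs
  have lFt : ∀ s ∈ Icc (0:ℝ) 1, Tendsto (fun i => (dt i).F s) l (𝓝 (d0.F s)) := by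
    intro s hs
    rw [tendsto_iff_norm_sub_tendsto_zero]
    apply squeeze_zero' (Eventually.of_forall fun i => norm_nonneg _) _
      (by simpa using hε.mul_const (s * (1 - s)) : Tendsto (fun i => ε i * (s * (1 - s))) l (𝓝 0))
    filter_upwards [hclt] with i a2
    exact (a2 s hs).1
  have lBt : ∀ s ∈ Icc (0:ℝ) 1, Tendsto (fun i => (dt i).B s) l (𝓝 (d0.B s)) := by
    intro s hs
    rw [tendsto_iff_norm_sub_tendsto_zero]
    apply squeeze_zero' (Eventually.of_forall fun i => norm_nonneg _) _ hε
    filter_upwards [hclt] with i a2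
    exact (a2 s hs).2.2
  have lowd : ∀ᶠ i in l, ∀ s ∈ Icc (0:ℝ) 1, k * (s * (1 - s)) ≤ (d i).ω s := by
    filter_upwards [hd, hcl, small ε2 hε2] with i a1 a2 a3
    exact hlow _ _ a1 a3 a2
  have lowdt : ∀ᶠ i in l, ∀ s ∈ Icc (0:ℝ) 1, k * (s * (1 - s)) ≤ (dt i).ω s := by
    filter_upwards [hdt, hclt, small ε2 hε2] with i a1 a2 a3
    exact hlow _ _ a1 a3 a2
  have bF : ∀ᶠ i in l, ∀ s ∈ Icc (0:ℝ) 1, |(dt i).F s| ≤ Φ + 1 := by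
    filter_upwards [hclt, small 1 one_pos] with i a1 a2 s hs
    have h1 := (a1 s hs).1
    have h2 := hFb s hs
    have h3 : ε i * (s * (1 - s)) ≤ 1 := by
      have := a1.nonneg
      have : s * (1 - s) ≤ 1 := by nlinarith [hs.1, hs.2]
      have : 0 ≤ s * (1 - s) := mul_nonneg hs.1 (by linarith [hs.2])
      nlinarith
    have := abs_sub_abs_le_abs_sub ((dt i).F s) (d0.F s)
    linarith
  have bB : ∀ᶠ i in l, ∀ s ∈ Icc (0:ℝ) 1, |(dt i).B s| ≤ β + 1 := by
    filter_upwards [hclt, small 1 one_pos] with i a1 a2 s hs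
    have h1 := (a1 s hs).2.2
    have h2 := hBb s hs
    have := abs_sub_abs_le_abs_sub ((dt i).B s) (d0.B s)
    linarith
  -- the integrating factor
  set J : ι → ℝ → ℝ := fun i s => (dt i).F s / ((d i).ω s * (dt i).ω s) with hJ
  set J0 : ℝ → ℝ := fun s => d0.F s / (d0.ω s * d0.ω s) with hJ0
  have cJ : ∀ᶠ i in l, ContinuousOn (J i) (Ioo 0 1) := by
    filter_upwards [hd, hdt] with i a1 a2
    apply (a2.cF.mono sub).div (a1.prof.contOn.mul a2.prof.contOn)
    intro s hs
    exact (mul_pos (a1.prof.pos s hs) (a2.prof.pos s hs)).ne'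
  have cJ0 : ContinuousOn J0 (Ioo 0 1) := by
    apply (h0.cF.mono sub).div (h0.prof.contOn.mul h0.prof.contOn)
    intro s hs
    exact (mul_pos (h0.prof.pos s hs) (h0.prof.pos s hs)).ne'
  have bJ : ∀ᶠ i in l, ∀ ρ > 0, ∀ s ∈ Icc (0:ℝ) 1, ρ ≤ s * (1 - s) →
      |J i s| ≤ (Φ + 1) / ((k * ρ) * (k * ρ)) := by
    filter_upwards [lowd, lowdt, bF] with i a1 a2 a3 ρ hρ s hs hρs
    have h1 : k * ρ ≤ (d i).ω s := le_trans (mul_le_mul_of_nonneg_left hρs hk.le) (a1 s hs)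
    have h2 : k * ρ ≤ (dt i).ω s := le_trans (mul_le_mul_of_nonneg_left hρs hk.le) (a2 s hs)
    have hkρ : 0 < k * ρ := by positivity
    simp only [hJ]
    rw [abs_div, abs_of_pos (mul_pos (lt_of_lt_of_le hkρ h1) (lt_of_lt_of_le hkρ h2))]
    apply div_le_div₀ (by positivity) (a3 s hs) (by positivity)
    exact mul_le_mul h1 h2 hkρ.le (by linarith)
  have bE : ∃ M, 0 ≤ M ∧ ∀ᶠ i in l, ∀ s ∈ Ioo (0:ℝ) 1, EE (J i) s ≤ M := by
    refine ⟨Real.exp ((Φ + 1) / ((k * (e * (1 - e))) * (k * (e * (1 - e))))), (Real.exp_pos _).le, ?_⟩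
    filter_upwards [cJ, bJ, hclt, small c hc, hd, hdt] with i a1 a2 a3 a4 a5 a6
    have hpos : ∀ s ∈ Ioo 0 e, 0 ≤ (dt i).F s ∧ (dt i).F (1 - s) ≤ 0 := by
      intro s hs
      have hs' : s ∈ Icc (0:ℝ) 1 := ⟨hs.1.le, by linarith [hs.2]⟩
      have hs'' : 1 - s ∈ Icc (0:ℝ) 1 := ⟨by linarith [hs.2], by linarith [hs.1]⟩
      have b1 := (abs_le.mp (a3 s hs').1).1
      have b2 := (abs_le.mp (a3 (1 - s) hs'').1).2
      have b3 := hends s hs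
      have hs0 := hs.1
      have b4 : ε i * (s * (1 - s)) ≤ c * s := by
        apply mul_le_mul a4 _ (mul_nonneg hs0.le hs''.1) (by positivity)
        nlinarith
      have : ε i * ((1 - s) * (1 - (1 - s))) = ε i * (s * (1 - s)) := by ring
      constructor <;> linarith
    apply EE_bound a1 he (b := 1 - e) (by linarith) he' (by linarith)
    · intro s hs
      have hs' : s ∈ Ioo (0:ℝ) 1 := ⟨hs.1, by linarith [hs.2]⟩
      exact div_nonneg (hpos s hs).1 (mul_pos (a5.prof.pos s hs') (a6.prof.pos s hs')).le
    · intro s hs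
      have hs' : s ∈ Ioo (0:ℝ) 1 := ⟨by linarith [hs.1], hs.2⟩
      have := (hpos (1 - s) ⟨by linarith [hs.2], by linarith [hs.1]⟩).2
      rw [sub_sub_cancel] at this
      exact div_nonpos_of_nonpos_of_nonneg this (mul_pos (a5.prof.pos s hs') (a6.prof.pos s hs')).le
    · intro s hs
      apply a2 _ (mul_pos he (by linarith)) s ⟨by linarith [hs.1], by linarith [hs.2]⟩
      nlinarith [hs.1, hs.2, mul_nonneg (sub_nonneg.mpr hs.1) (sub_nonneg.mpr hs.2)]
  obtain ⟨M, hM0, hM⟩ := bE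
  have lJ : ∀ s ∈ Ioo (0:ℝ) 1, Tendsto (fun i => J i s) l (𝓝 (J0 s)) := by
    intro s hs
    have h1 := h0.prof.pos s hs
    exact (lFt s (sub hs)).div ((lω s (sub hs)).mul (lωt s (sub hs))) (mul_pos h1 h1).ne'
  have lE : ∀ s ∈ Ioo (0:ℝ) 1, Tendsto (fun i => EE (J i) s) l (𝓝 (EE J0 s)) := by
    intro s hs
    apply (Real.continuous_exp.tendsto _).comp
    have hsub : Set.uIoc (1/2 : ℝ) s ⊆ Ioo 0 1 := fun x hx => uIcc_half_subset hs (uIoc_subset_uIcc hx)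
    have hρ : 0 < s * (1 - s) := mul_pos hs.1 (by linarith [hs.2])
    apply intervalIntegral.tendsto_integral_filter_of_dominated_convergence
      (fun _ => (Φ + 1) / ((k * (s * (1 - s))) * (k * (s * (1 - s)))))
    · filter_upwards [cJ] with i a1
      exact (a1.mono hsub).aestronglyMeasurable measurableSet_uIoc
    · filter_upwards [bJ] with i a1
      apply Eventually.of_forall
      intro x hx
      apply a1 _ hρ x (sub (hsub hx))
      have h1 := uIoc_subset_uIcc hx
      rw [mem_uIcc] at h1
      rcases h1 with h1 | h1
      · nlinarith [h1.1, h1.2]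
      · nlinarith [h1.1, h1.2]
    · exact intervalIntegrable_const
    · apply Eventually.of_forall
      intro x hx
      exact lJ x (hsub hx)
  -- limits of the two integrals
  have lm1 : ∀ᶠ i in l, |(d i).m| ≤ |d0.m| + 1 :=
    (lm.abs.eventually (gt_mem_nhds (lt_add_one _))).mono fun i hi => le_of_lt hi
  set X : ι → ℝ → ℝ := fun i s => ((dt i).F s - (d i).F s) / δ i / (d i).ω s +
    ((dt i).A s - (d i).A s) / δ i + (d i).m * (((dt i).B s - (d i).B s) / δ i) with hX
  have cX : ∀ᶠ i in l, ContinuousOn (X i) (Ioo 0 1) := by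
    filter_upwards [hd, hdt] with i a1 a2
    have c1 := (a2.cF.mono sub).sub (a1.cF.mono sub)
    have c2 := (a2.cA.mono sub).sub (a1.cA.mono sub)
    have c3 := (a2.cB.mono sub).sub (a1.cB.mono sub)
    apply ContinuousOn.add
    · apply ContinuousOn.add
      · exact (c1.div_const _).div a1.prof.contOn fun s hs => (a1.prof.pos s hs).ne'
      · exact c2.div_const _
    · exact continuousOn_const.mul (c3.div_const _)
  have bX : ∀ᶠ i in l, ∀ s ∈ Ioo (0:ℝ) 1, |X i s| ≤ C / k + C + (|d0.m| + 1) * C := by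
    filter_upwards [hlip, hδ, lowd, lm1, hd] with i a1 a2 a3 a4 a5 s hs
    obtain ⟨b1, b2, b3⟩ := a1 s (sub hs)
    have hp : 0 < s * (1 - s) := mul_pos hs.1 (by linarith [hs.2])
    have hδp := abs_pos.mpr a2
    have e1 : |((dt i).F s - (d i).F s) / δ i / (d i).ω s| ≤ C / k := by
      rw [abs_div, abs_div, abs_of_pos (a5.prof.pos s hs), div_le_iff₀ (a5.prof.pos s hs),
        div_le_iff₀ hδp]
      calc _ ≤ C * |δ i| * (s * (1 - s)) := b1
        _ = C / k * (k * (s * (1 - s))) * |δ i| := by field_simp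
        _ ≤ _ := by
          apply mul_le_mul_of_nonneg_right _ hδp.le
          exact mul_le_mul_of_nonneg_left (a3 s (sub hs)) (by positivity)
    have e2 : |((dt i).A s - (d i).A s) / δ i| ≤ C := by
      rw [abs_div, div_le_iff₀ hδp]; exact b2
    have e3 : |((dt i).B s - (d i).B s) / δ i| ≤ C := by
      rw [abs_div, div_le_iff₀ hδp]; exact b3
    refine (abs_add_three _ _ _).trans (add_le_add (add_le_add e1 e2) ?_)
    rw [abs_mul]
    exact mul_le_mul a4 e3 (abs_nonneg _) (by positivity)
  have L1 : Tendsto (fun i => ∫ s in Ioo (0:ℝ) 1, EE (J i) s * X i s) l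
      (𝓝 (∫ s in Ioo (0:ℝ) 1, EE J0 s * (F' s / d0.ω s + A' s + d0.m * B' s))) := by
    apply tendsto_integral_filter_of_dominated_convergence
      (fun _ => M * (C / k + C + (|d0.m| + 1) * C))
    · filter_upwards [cJ, cX] with i a1 a2
      exact ((EE_contOn a1).mul a2).aestronglyMeasurable measurableSet_Ioo
    · filter_upwards [hM, bX] with i a1 a2
      rw [ae_restrict_iff' measurableSet_Ioo]
      apply Eventually.of_forall
      intro s hs
      rw [Real.norm_eq_abs, abs_mul, abs_of_pos (EE_pos _ _)]
      exact mul_le_mul (a1 s hs) (a2 s hs) (abs_nonneg _) hM0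
    · apply integrable_bdd continuousOn_const (fun s _ => le_refl _)
    · rw [ae_restrict_iff' measurableSet_Ioo]
      apply Eventually.of_forall
      intro s hs
      exact (lE s hs).mul ((((lF s hs).div (lω s (sub hs)) (h0.prof.pos s hs).ne').add (lA s hs)).add
        (lm.mul (lB s hs)))
  have L2 : Tendsto (fun i => ∫ s in Ioo (0:ℝ) 1, EE (J i) s * (dt i).B s) l
      (𝓝 (∫ s in Ioo (0:ℝ) 1, EE J0 s * d0.B s)) := by
    apply tendsto_integral_filter_of_dominated_convergence (fun _ => M * (β + 1))
    · filter_upwards [cJ, hdt] with i a1 a2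
      exact ((EE_contOn a1).mul (a2.cB.mono sub)).aestronglyMeasurable measurableSet_Ioo
    · filter_upwards [hM, bB] with i a1 a2
      rw [ae_restrict_iff' measurableSet_Ioo]
      apply Eventually.of_forall
      intro s hs
      rw [Real.norm_eq_abs, abs_mul, abs_of_pos (EE_pos _ _)]
      exact mul_le_mul (a1 s hs) (a2 s (sub hs)) (abs_nonneg _) hM0
    · apply integrable_bdd continuousOn_const (fun s _ => le_refl _)
    · rw [ae_restrict_iff' measurableSet_Ioo]
      apply Eventually.of_forall
      intro s hs
      exact (lE s hs).mul (lBt s (sub hs))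
  have hE0 : ∀ s ∈ Ioo (0:ℝ) 1, EE J0 s ≤ M := by
    intro s hs
    exact le_of_tendsto (lE s hs) (hM.mono fun i hi => hi s hs)
  have pos0 : 0 < ∫ s in Ioo (0:ℝ) 1, EE J0 s * d0.B s := by
    apply int_pos
    · apply integrable_bdd ((EE_contOn cJ0).mul (h0.cB.mono sub)) (M := M * β)
      intro s hs
      rw [Pi.mul_apply, abs_mul, abs_of_pos (EE_pos _ _)]
      exact mul_le_mul (hE0 s hs) (hBb s (sub hs)) (abs_nonneg _) hM0
    · intro s hs
      exact mul_pos (EE_pos _ _) (h0.Bpos s (sub hs))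
  refine ⟨_, ((L1.div L2 pos0.ne').neg).congr' ?_⟩
  filter_upwards [hd, hdt, hδ, cJ, cX, hM, bX, bB, L2.eventually (lt_mem_nhds pos0)] with
    i a1 a2 a3 a4 a5 a6 a7 a8 a9
  obtain ⟨s0, hs0, hF, hF'⟩ := a2.sgn
  have hReq : ∀ s, ((dt i).F s - (d i).F s) / (d i).ω s +
      (((dt i).A s + (dt i).m * (dt i).B s) - ((d i).A s + (d i).m * (d i).B s)) =
      δ i * X i s + ((dt i).m - (d i).m) * (dt i).B s := by
    intro s
    have : δ i * X i s = ((dt i).F s - (d i).F s) / (d i).ω s + ((dt i).A s - (d i).A s) +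
        (d i).m * ((dt i).B s - (d i).B s) := by
      simp only [hX, mul_add]
      congr 1
      · congr 1
        · rw [div_right_comm, mul_div_cancel₀ _ a3]
        · rw [mul_div_cancel₀ _ a3]
      · rw [mul_left_comm, mul_div_cancel₀ _ a3]
    rw [this]; ring
  obtain ⟨M', hM', hint⟩ := melnikov a1.prof a2.prof hs0 hF hF' a1.cF a1.cG a2.cF a2.cG
    (r := |δ i| * (C / k + C + (|d0.m| + 1) * C) + |(dt i).m - (d i).m| * (β + 1)) (by
      intro s hs
      rw [hReq]
      refine (abs_add_le _ _).trans ?_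
      rw [abs_mul, abs_mul]
      exact add_le_add (mul_le_mul_of_nonneg_left (a7 s hs) (abs_nonneg _))
        (mul_le_mul_of_nonneg_left (a8 s (sub hs)) (abs_nonneg _)))
  have i1 : IntegrableOn (fun s => EE (J i) s * X i s) (Ioo 0 1) := by
    apply integrable_bdd ((EE_contOn a4).mul a5) (M := M * (C / k + C + (|d0.m| + 1) * C))
    intro s hs
    rw [Pi.mul_apply, abs_mul, abs_of_pos (EE_pos _ _)]
    exact mul_le_mul (a6 s hs) (a7 s hs) (abs_nonneg _) hM0
  have i2 : IntegrableOn (fun s => EE (J i) s * (dt i).B s) (Ioo 0 1) := by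
    apply integrable_bdd ((EE_contOn a4).mul (a2.cB.mono sub)) (M := M * (β + 1))
    intro s hs
    rw [Pi.mul_apply, abs_mul, abs_of_pos (EE_pos _ _)]
    exact mul_le_mul (a6 s hs) (a8 s (sub hs)) (abs_nonneg _) hM0
  have hfinal : δ i * (∫ s in Ioo (0:ℝ) 1, EE (J i) s * X i s) +
      ((dt i).m - (d i).m) * (∫ s in Ioo (0:ℝ) 1, EE (J i) s * (dt i).B s) = 0 := by
    rw [← integral_const_mul, ← integral_const_mul, ← integral_add (i1.const_mul _) (i2.const_mul _)]
    refine Eq.trans ?_ hint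
    congr 1
    funext s
    rw [hReq]
    ring
  have hden := a9.ne'
  simp only [Pi.div_apply, Pi.neg_apply]
  field_simp
  linarith

end

section
open Topology

theorem contDiffOn_of_strict {m : ℝ × ℝ → ℝ} {D : Set (ℝ × ℝ)} (hD : IsOpen D)
    (h : ∀ p ∈ D, ∃ m' : ℝ × ℝ →L[ℝ] ℝ, HasStrictFDerivAt m m' p) : ContDiffOn ℝ 1 m D := by
  have : (1 : WithTop ℕ∞) = 0 + 1 := by simp
  rw [this, contDiffOn_succ_iff_fderiv_of_isOpen hD]
  refine ⟨fun p hp => ?_, by simp, ?_⟩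
  · obtain ⟨m', hm⟩ := h p hp
    exact hm.hasFDerivAt.differentiableAt.differentiableWithinAt
  rw [contDiffOn_zero]
  intro p hp
  apply ContinuousAt.continuousWithinAt
  obtain ⟨m', hm⟩ := h p hp
  rw [ContinuousAt, hm.hasFDerivAt.fderiv, Metric.tendsto_nhds]
  intro ε hε
  have h1 := (hasStrictFDerivAt_iff_isLittleO.mp hm).def (half_pos hε)
  rw [nhds_prod_eq] at h1
  obtain ⟨t, ht, h1⟩ := (eventually_prod_self_iff
    (r := fun x y => ‖m x - m y - m' (x - y)‖ ≤ ε / 2 * ‖x - y‖)).mp h1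
  have ht' := eventually_eventually_nhds.mpr ht
  filter_upwards [ht', hD.mem_nhds hp] with q hq hqD
  obtain ⟨q', hq'⟩ := h q hqD
  have h2 : HasFDerivAt (fun x => m x - m' x) (q' - m') q :=
    hq'.hasFDerivAt.sub m'.hasFDerivAt
  have h3 := h2.le_of_lipschitzOn (C := ⟨ε/2, (half_pos hε).le⟩) hq (by
    apply LipschitzOnWith.of_dist_le_mul
    intro x hx y hy
    have := h1 x hx y hy
    rw [dist_eq_norm, dist_eq_norm]
    refine le_trans (le_of_eq ?_) this
    congr 1
    simp only [map_sub]; ring)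
  rw [hq'.hasFDerivAt.fderiv, dist_eq_norm]
  exact lt_of_le_of_lt h3 (half_lt_self hε)

/-- the filter of `(p,t)` with `p → p0`, `t → 0`, `t ≠ 0`. -/
def slF (p0 : ℝ × ℝ) : Filter ((ℝ × ℝ) × ℝ) := 𝓝[{q | q.2 ≠ 0}] (p0, 0)

instance (p0 : ℝ × ℝ) : (slF p0).IsCountablyGenerated := by unfold slF; infer_instance

theorem littleo_of_slope {m : ℝ × ℝ → ℝ} {p0 e : ℝ × ℝ} {a : ℝ}
    (h : Tendsto (fun q : (ℝ × ℝ) × ℝ => (m (q.1 + q.2 • e) - m q.1) / q.2) (slF p0) (𝓝 a)) :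
    (fun q : (ℝ × ℝ) × ℝ => m (q.1 + q.2 • e) - m q.1 - q.2 * a) =o[𝓝 (p0, 0)]
      (fun q : (ℝ × ℝ) × ℝ => q.2) := by
  rw [Asymptotics.isLittleO_iff]
  intro ε hε
  have h1 := Metric.tendsto_nhds.mp h ε hε
  rw [slF, eventually_nhdsWithin_iff] at h1
  filter_upwards [h1] with q hq
  by_cases h0 : q.2 = 0
  · simp [h0]
  have h2 := hq h0
  rw [Real.dist_eq] at h2
  have : m (q.1 + q.2 • e) - m q.1 - q.2 * a = ((m (q.1 + q.2 • e) - m q.1) / q.2 - a) * q.2 := by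
    field_simp
  rw [this, norm_mul]
  exact mul_le_mul_of_nonneg_right h2.le (norm_nonneg _)

theorem strict_of_slopes {m : ℝ × ℝ → ℝ} {p0 : ℝ × ℝ} {a b : ℝ}
    (h1 : Tendsto (fun q : (ℝ × ℝ) × ℝ => (m (q.1 + q.2 • ((1:ℝ),(0:ℝ))) - m q.1) / q.2)
      (slF p0) (𝓝 a))
    (h2 : Tendsto (fun q : (ℝ × ℝ) × ℝ => (m (q.1 + q.2 • ((0:ℝ),(1:ℝ))) - m q.1) / q.2)
      (slF p0) (𝓝 b)) :
    ∃ m' : ℝ × ℝ →L[ℝ] ℝ, HasStrictFDerivAt m m' p0 := by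
  refine ⟨a • ContinuousLinearMap.fst ℝ ℝ ℝ + b • ContinuousLinearMap.snd ℝ ℝ ℝ, ?_⟩
  rw [hasStrictFDerivAt_iff_isLittleO]
  have t1 : Tendsto (fun x : (ℝ × ℝ) × (ℝ × ℝ) => (x.2, x.1.1 - x.2.1)) (𝓝 (p0, p0))
      (𝓝 (p0, 0)) := by
    have : Continuous (fun x : (ℝ × ℝ) × (ℝ × ℝ) => (x.2, x.1.1 - x.2.1)) := by fun_prop
    simpa using this.tendsto (p0, p0)
  have t2 : Tendsto (fun x : (ℝ × ℝ) × (ℝ × ℝ) => ((x.1.1, x.2.2), x.1.2 - x.2.2)) (𝓝 (p0, p0))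
      (𝓝 (p0, 0)) := by
    have : Continuous (fun x : (ℝ × ℝ) × (ℝ × ℝ) => ((x.1.1, x.2.2), x.1.2 - x.2.2)) := by fun_prop
    simpa using this.tendsto (p0, p0)
  have o1 := (littleo_of_slope h1).comp_tendsto t1
  have o2 := (littleo_of_slope h2).comp_tendsto t2
  have b1 : (fun x : (ℝ × ℝ) × (ℝ × ℝ) => x.1.1 - x.2.1) =O[𝓝 (p0, p0)] (fun x => x.1 - x.2) :=
    Asymptotics.isBigO_of_le _ fun x => norm_fst_le (x.1 - x.2)
  have b2 : (fun x : (ℝ × ℝ) × (ℝ × ℝ) => x.1.2 - x.2.2) =O[𝓝 (p0, p0)] (fun x => x.1 - x.2) :=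
    Asymptotics.isBigO_of_le _ fun x => norm_snd_le (x.1 - x.2)
  refine ((o1.trans_isBigO b1).add (o2.trans_isBigO b2)).congr_left fun x => ?_
  obtain ⟨⟨x1, x2⟩, ⟨y1, y2⟩⟩ := x
  simp
  ring

end

section
open Topology

structure Ctx (V V' : ℝ → ℝ) (UM : ℝ) (uMx umx : ℝ → ℝ) : Prop where
  dV : ∀ u, 0 < u → HasDerivAt V (V' u) u
  cV : ContinuousOn V (Ici 0)
  V0 : 0 ≤ V' 0
  UMpos : 0 < UM
  mono : StrictMonoOn V' (Icc 0 UM)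
  anti : StrictAntiOn V' (Ici UM)
  C1V : ContDiffOn ℝ 1 V (Ioi 0)
  C1V' : ContDiffOn ℝ 1 V' (Ioi 0)
  hM : UMaxHyp V' UM uMx
  hm : UMinHyp V' UM umx

theorem contDiffOn_one_of_deriv {f f' : ℝ → ℝ} (h : ∀ u, 0 < u → HasDerivAt f (f' u) u)
    (hc : ContinuousOn f' (Ioi 0)) : ContDiffOn ℝ 1 f (Ioi 0) := by
  have : (1 : WithTop ℕ∞) = 0 + 1 := by simp
  rw [this, contDiffOn_succ_iff_deriv_of_isOpen isOpen_Ioi]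
  refine ⟨fun u hu => (h u hu).differentiableAt.differentiableWithinAt, by simp, ?_⟩
  rw [contDiffOn_zero]
  exact hc.congr fun u hu => (h u hu).deriv

theorem const_sign {g : ℝ → ℝ} {s : Set ℝ} (hs : IsPreconnected s) (hc : ContinuousOn g s)
    (h : ∀ x ∈ s, g x ≠ 0) : (∀ x ∈ s, 0 < g x) ∨ (∀ x ∈ s, g x < 0) := by
  by_contra! hcon
  obtain ⟨⟨x, hx, hx'⟩, ⟨y, hy, hy'⟩⟩ := hcon
  obtain ⟨z, hz, hz'⟩ := hs.intermediate_value hx hy hc ⟨hx', hy'⟩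
  exact h z hz hz'

theorem mkCtx {V V' V'' : ℝ → ℝ} {UM : ℝ} {uMx umx : ℝ → ℝ} (hA : A1 V V' V'' UM)
    (hM : UMaxHyp V' UM uMx) (hm : UMinHyp V' UM umx) : Ctx V V' UM uMx umx := by
  obtain ⟨h1, h2, h3, h4, h5, -, -, h6, h7, h8⟩ := hA
  have dV : ∀ u, 0 < u → HasDerivAt V (V' u) u := fun u hu =>
    (h1 u hu.le).hasDerivAt (Ici_mem_nhds hu)
  refine ⟨dV, fun u hu => (h1 u hu).continuousWithinAt, ?_, h6, ?_, ?_,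
    contDiffOn_one_of_deriv dV (h2.mono Ioi_subset_Ici_self),
    contDiffOn_one_of_deriv (fun u hu => h3 u hu) h4, hM, hm⟩
  · have : Tendsto V' (𝓝[>] 0) (𝓝 (V' 0)) :=
      (h2 0 self_mem_Ici).mono_left (nhdsWithin_mono _ Ioi_subset_Ici_self)
    apply ge_of_tendsto this
    filter_upwards [self_mem_nhdsWithin] with u hu using (h5 u hu).le
  · rcases const_sign (isPreconnected_Ioo (a := (0:ℝ)) (b := UM))
      (h4.mono Ioo_subset_Ioi_self) (fun x hx h => hx.2.ne ((h8 x hx.1).mp h)) with h | h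
    · apply strictMonoOn_of_deriv_pos (convex_Icc _ _) (h2.mono Icc_subset_Ici_self)
      intro x hx
      rw [interior_Icc] at hx
      rw [(h3 x hx.1).deriv]; exact h x hx
    · have := strictAntiOn_of_deriv_neg (convex_Icc _ _) (h2.mono (Icc_subset_Ici_self (a := UM) (b := 0)))
        (by
          intro x hx
          rw [interior_Icc] at hx
          rw [(h3 x hx.1).deriv]; exact h x hx)
      have h9 := this (a := UM / 2) ⟨by linarith, by linarith⟩ (b := UM) ⟨by linarith, le_refl _⟩
        (by linarith)
      linarith [h7 (UM / 2) (by linarith)]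
  · have hsub : Ici UM ⊆ Ici 0 := Ici_subset_Ici.mpr h6.le
    rcases const_sign (isPreconnected_Ioi (a := UM))
      (h4.mono (Ioi_subset_Ioi h6.le))
      (fun x hx h => (ne_of_gt hx) ((h8 x (h6.trans hx)).mp h)) with h | h
    · have := strictMonoOn_of_deriv_pos (convex_Ici _) (h2.mono hsub)
        (by
          intro x hx
          rw [interior_Ici] at hx
          rw [(h3 x (h6.trans hx)).deriv]; exact h x hx)
      have h9 := this (a := UM) self_mem_Ici (b := UM + 1) (by simp) (by linarith)
      linarith [h7 (UM + 1) (by linarith)]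
    · apply strictAntiOn_of_deriv_neg (convex_Ici _) (h2.mono hsub)
      intro x hx
      rw [interior_Ici] at hx
      rw [(h3 x (h6.trans hx)).deriv]; exact h x hx

section
variable {V V' : ℝ → ℝ} {UM : ℝ} {uMx umx : ℝ → ℝ}

theorem Ctx.Kpos {K : ℝ} (X : Ctx V V' UM uMx umx) (hK : V' 0 < K) : 0 < K :=
  lt_of_le_of_lt X.V0 hK

theorem Ctx.dphi (X : Ctx V V' UM uMx umx) (K : ℝ) {u : ℝ} (hu : 0 < u) :
    HasDerivAt (fun u => K * u - V u) (K - V' u) u := by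
  have h := ((hasDerivAt_id u).const_mul K).sub (X.dV u hu)
  rw [mul_one] at h
  exact h

theorem Ctx.cphi (X : Ctx V V' UM uMx umx) (K : ℝ) :
    ContinuousOn (fun u => K * u - V u) (Ici 0) :=
  (continuousOn_const.mul continuousOn_id).sub X.cV

theorem Ctx.lt1 (X : Ctx V V' UM uMx umx) {K : ℝ} (hK : V' 0 < K) (hK' : K < V' UM) {u : ℝ}
    (hu : 0 ≤ u) (hu' : u < uMx K) : V' u < K := by
  obtain ⟨h1, h2⟩ := X.hM K hK hK'
  rw [← h2]
  exact X.mono ⟨hu, by linarith [h1.2]⟩ ⟨h1.1.le, h1.2.le⟩ hu'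

theorem Ctx.lt2 (X : Ctx V V' UM uMx umx) {K : ℝ} (hK : V' 0 < K) (hK' : K < V' UM) {u : ℝ}
    (hu : uMx K < u) (hu' : u < umx K) : K < V' u := by
  obtain ⟨h1, h2⟩ := X.hM K hK hK'
  obtain ⟨h3, h4⟩ := X.hm K (X.Kpos hK) hK'
  rcases le_total u UM with h | h
  · calc K = V' (uMx K) := h2.symm
      _ < V' u := X.mono ⟨h1.1.le, h1.2.le⟩ ⟨by linarith [h1.1], h⟩ hu
  · calc K = V' (umx K) := h4.symm
      _ < V' u := X.anti h h3.le hu'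

theorem Ctx.lt3 (X : Ctx V V' UM uMx umx) {K : ℝ} (hK : V' 0 < K) (hK' : K < V' UM) {u : ℝ}
    (hu : umx K < u) : V' u < K := by
  obtain ⟨h3, h4⟩ := X.hm K (X.Kpos hK) hK'
  calc V' u < V' (umx K) := X.anti h3.le (h3.trans hu).le hu
    _ = K := h4

theorem Ctx.z1 (X : Ctx V V' UM uMx umx) {K : ℝ} (hK : V' 0 < K) (hK' : K < V' UM) :
    StrictMonoOn (fun u => K * u - V u) (Icc 0 (uMx K)) := by
  apply strictMonoOn_of_deriv_pos (convex_Icc _ _) ((X.cphi K).mono Icc_subset_Ici_self)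
  intro u hu
  rw [interior_Icc] at hu
  rw [(X.dphi K hu.1).deriv]
  linarith [X.lt1 hK hK' hu.1.le hu.2]

theorem Ctx.z2 (X : Ctx V V' UM uMx umx) {K : ℝ} (hK : V' 0 < K) (hK' : K < V' UM) :
    StrictAntiOn (fun u => K * u - V u) (Icc (uMx K) (umx K)) := by
  have h0 := (X.hM K hK hK').1.1
  apply strictAntiOn_of_deriv_neg (convex_Icc _ _)
    ((X.cphi K).mono fun u hu => le_trans h0.le hu.1)
  intro u hu
  rw [interior_Icc] at hu
  rw [(X.dphi K (h0.trans hu.1)).deriv]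
  linarith [X.lt2 hK hK' hu.1 hu.2]

theorem Ctx.z3 (X : Ctx V V' UM uMx umx) {K : ℝ} (hK : V' 0 < K) (hK' : K < V' UM) :
    StrictMonoOn (fun u => K * u - V u) (Ici (umx K)) := by
  have h0 : 0 < umx K := X.UMpos.trans (X.hm K (X.Kpos hK) hK').1
  apply strictMonoOn_of_deriv_pos (convex_Ici _)
    ((X.cphi K).mono fun u hu => le_trans h0.le hu)
  intro u hu
  rw [interior_Ici] at hu
  rw [(X.dphi K (h0.trans hu)).deriv]
  linarith [X.lt3 hK hK' hu]

theorem Ctx.ord (X : Ctx V V' UM uMx umx) {K : ℝ} (hK : V' 0 < K) (hK' : K < V' UM) :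
    0 < uMx K ∧ uMx K < UM ∧ UM < umx K :=
  ⟨(X.hM K hK hK').1.1, (X.hM K hK hK').1.2, (X.hm K (X.Kpos hK) hK').1⟩

theorem Ctx.isOpen (X : Ctx V V' UM uMx umx) : IsOpen (D1 V V' UM uMx umx) := by
  rw [isOpen_iff_mem_nhds]
  rintro ⟨K0, c0⟩ ⟨h1, h2, h3, h4⟩
  simp only at h1 h2 h3 h4
  obtain ⟨o1, o2, o3⟩ := X.ord h1 h2
  have h3a := (le_max_left _ _).trans_lt h3
  have h3b := (le_max_right _ _).trans_lt h3
  rw [cmf] at h3b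
  rw [cMf] at h4
  have e1 : ∀ᶠ p : ℝ × ℝ in 𝓝 (K0, c0), V' 0 < p.1 :=
    (continuous_fst.tendsto (K0, c0)).eventually (lt_mem_nhds h1)
  have e2 : ∀ᶠ p : ℝ × ℝ in 𝓝 (K0, c0), p.1 < V' UM :=
    (continuous_fst.tendsto (K0, c0)).eventually (gt_mem_nhds h2)
  have e3 : ∀ᶠ p : ℝ × ℝ in 𝓝 (K0, c0), c0v V < p.2 :=
    (continuous_snd.tendsto (K0, c0)).eventually (lt_mem_nhds h3a)
  have e4 : ∀ᶠ p : ℝ × ℝ in 𝓝 (K0, c0), p.1 * umx K0 - V (umx K0) < p.2 :=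
    ContinuousAt.eventually_lt (by fun_prop) (by fun_prop) h3b
  have e5 : ∀ᶠ p : ℝ × ℝ in 𝓝 (K0, c0), p.2 < p.1 * uMx K0 - V (uMx K0) :=
    ContinuousAt.eventually_lt (by fun_prop) (by fun_prop) h4
  filter_upwards [e1, e2, e3, e4, e5] with p a1 a2 a3 a4 a5
  obtain ⟨q1, q2, q3⟩ := X.ord a1 a2
  refine ⟨a1, a2, max_lt a3 (lt_of_le_of_lt ?_ a4), lt_of_lt_of_le a5 ?_⟩
  · rw [cmf]
    rcases le_total (umx K0) (umx p.1) with h | h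
    · exact (X.z2 a1 a2).antitoneOn ⟨by linarith, h⟩ ⟨by linarith, le_refl _⟩ h
    · exact (X.z3 a1 a2).monotoneOn self_mem_Ici h h
  · rw [cMf]
    rcases le_total (uMx K0) (uMx p.1) with h | h
    · exact (X.z1 a1 a2).monotoneOn ⟨o1.le, h⟩ ⟨q1.le, le_refl _⟩ h
    · exact (X.z2 a1 a2).antitoneOn ⟨le_refl _, by linarith⟩ ⟨h, by linarith⟩ h

theorem zero_iff {K c u : ℝ} (hK : 0 < K) : fTV V K c u = 0 ↔ K * u - V u = c := by
  rw [fTV, div_eq_zero_iff]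
  constructor
  · rintro (h | h) <;> linarith
  · intro h; left; linarith

/-- location of zeros -/
theorem Ctx.loc (X : Ctx V V' UM uMx umx) {K c u1 u0 u2 : ℝ} (hK : V' 0 < K) (hK' : K < V' UM)
    (hz : ZerosD1 V K c u1 u0 u2) :
    0 < u1 ∧ u1 < uMx K ∧ uMx K < u0 ∧ u0 < umx K ∧ umx K < u2 := by
  obtain ⟨o1, o2, o3⟩ := X.ord hK hK'
  obtain ⟨p1, l1, l2, e1, e0, e2, -⟩ := hz
  rw [zero_iff (X.Kpos hK)] at e1 e0 e2
  have A : uMx K < u0 := by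
    by_contra! h
    have := X.z1 hK hK' ⟨p1.le, by linarith⟩ ⟨by linarith, h⟩ l1
    simp only at this; linarith
  have B : u0 < umx K := by
    by_contra! h
    have := X.z3 hK hK' (a := u0) h (b := u2) (mem_Ici.mpr (by linarith)) l2
    simp only at this; linarith
  refine ⟨p1, ?_, A, B, ?_⟩
  · by_contra! h
    have := X.z2 hK hK' (a := u1) ⟨h, by linarith⟩ (b := u0) ⟨A.le, B.le⟩ l1
    simp only at this; linarith
  · by_contra! h
    have := X.z2 hK hK' (a := u0) ⟨A.le, B.le⟩ (b := u2) ⟨by linarith, h⟩ l2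
    simp only at this; linarith

theorem Ctx.fpos (X : Ctx V V' UM uMx umx) {K c u1 u0 u2 : ℝ} (hK : V' 0 < K) (hK' : K < V' UM)
    (hz : ZerosD1 V K c u1 u0 u2) {u : ℝ} (hu : u ∈ Ioo u1 u0) : 0 < fTV V K c u := by
  obtain ⟨q1, q2, q3, q4, q5⟩ := X.loc hK hK' hz
  obtain ⟨p1, l1, l2, e1, e0, e2, -⟩ := hz
  rw [zero_iff (X.Kpos hK)] at e1 e0 e2
  rw [fTV]
  apply div_pos _ (X.Kpos hK)
  rcases le_total u (uMx K) with h | h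
  · have := X.z1 hK hK' (a := u1) ⟨p1.le, q2.le⟩ (b := u) ⟨by linarith [hu.1], h⟩ hu.1
    simp only at this; linarith
  · have := X.z2 hK hK' (a := u) ⟨h, by linarith [hu.2]⟩ (b := u0) ⟨q3.le, q4.le⟩ hu.2
    simp only at this; linarith

theorem Ctx.fneg (X : Ctx V V' UM uMx umx) {K c u1 u0 u2 : ℝ} (hK : V' 0 < K) (hK' : K < V' UM)
    (hz : ZerosD1 V K c u1 u0 u2) {u : ℝ} (hu : u ∈ Ioo u0 u2) : fTV V K c u < 0 := by
  obtain ⟨q1, q2, q3, q4, q5⟩ := X.loc hK hK' hz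
  obtain ⟨p1, l1, l2, e1, e0, e2, -⟩ := hz
  rw [zero_iff (X.Kpos hK)] at e1 e0 e2
  rw [fTV]
  apply div_neg_of_neg_of_pos _ (X.Kpos hK)
  rcases le_total u (umx K) with h | h
  · have := X.z2 hK hK' (a := u0) ⟨q3.le, q4.le⟩ (b := u) ⟨by linarith [hu.1], h⟩ hu.1
    simp only at this; linarith
  · have := X.z3 hK hK' (a := u) h (b := u2) q5.le hu.2
    simp only at this; linarith

theorem Ctx.uniq1 (X : Ctx V V' UM uMx umx) {K c u1 u0 u2 : ℝ} (hK : V' 0 < K) (hK' : K < V' UM)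
    (hz : ZerosD1 V K c u1 u0 u2) {u : ℝ} (hu : 0 < u) (hu' : u < UM) (hV : V' u < K)
    (h0 : K * u - V u = c) : u = u1 := by
  obtain ⟨q1, q2, q3, q4, q5⟩ := X.loc hK hK' hz
  obtain ⟨o1, o2, o3⟩ := X.ord hK hK'
  have hlt : u < uMx K := by
    by_contra! h
    rcases h.eq_or_lt with h | h
    · rw [← h, (X.hM K hK hK').2] at hV; exact lt_irrefl _ hV
    · linarith [X.lt2 hK hK' h (by linarith)]
  rcases hz.2.2.2.2.2.2 u hu ((zero_iff (X.Kpos hK)).mpr h0) with h | h | h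
  · exact h
  · linarith
  · linarith

theorem Ctx.uniq2 (X : Ctx V V' UM uMx umx) {K c u1 u0 u2 : ℝ} (hK : V' 0 < K) (hK' : K < V' UM)
    (hz : ZerosD1 V K c u1 u0 u2) {u : ℝ} (hu' : UM < u) (hV : V' u < K)
    (h0 : K * u - V u = c) : u = u2 := by
  obtain ⟨q1, q2, q3, q4, q5⟩ := X.loc hK hK' hz
  obtain ⟨o1, o2, o3⟩ := X.ord hK hK'
  have hlt : umx K < u := by
    by_contra! h
    rcases h.eq_or_lt with h | h
    · rw [h, (X.hm K (X.Kpos hK) hK').2] at hV; exact lt_irrefl _ hV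
    · linarith [X.lt2 hK hK' (u := u) (by linarith) h]
  rcases hz.2.2.2.2.2.2 u (X.UMpos.trans hu') ((zero_iff (X.Kpos hK)).mpr h0) with h | h | h
  · linarith
  · linarith
  · exact h

end
end

section
open Topology

theorem strict_inv {V V' : ℝ → ℝ} {U : ℝ → ℝ → ℝ} {K0 x0 : ℝ} 
    (hV : HasStrictDerivAt V (V' x0) x0) (hK : V' x0 < K0)
    (h : ∀ᶠ q : ℝ × ℝ in 𝓝 (K0, x0), U q.1 (q.1 * q.2 - V q.2) = q.2) :
    ∃ m' : ℝ × ℝ →L[ℝ] ℝ, HasStrictFDerivAt (fun p : ℝ × ℝ => U p.1 p.2) m'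
      (K0, K0 * x0 - V x0) := by
  have hne : K0 - V' x0 ≠ 0 := by linarith
  let f1 : ℝ × ℝ →L[ℝ] ℝ × ℝ := (ContinuousLinearMap.fst ℝ ℝ ℝ).prod
    (x0 • ContinuousLinearMap.fst ℝ ℝ ℝ + (K0 - V' x0) • ContinuousLinearMap.snd ℝ ℝ ℝ)
  let f2 : ℝ × ℝ →L[ℝ] ℝ × ℝ := (ContinuousLinearMap.fst ℝ ℝ ℝ).prod
    ((K0 - V' x0)⁻¹ • (ContinuousLinearMap.snd ℝ ℝ ℝ - x0 • ContinuousLinearMap.fst ℝ ℝ ℝ))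
  let e : (ℝ × ℝ) ≃L[ℝ] (ℝ × ℝ) := ContinuousLinearEquiv.equivOfInverse f1 f2
    (by intro x; ext <;> simp [f1, f2]; field_simp)
    (by intro x; ext <;> simp [f1, f2]; field_simp; ring)
  have hΨ : HasStrictFDerivAt (fun q : ℝ × ℝ => (q.1, q.1 * q.2 - V q.2)) (e : ℝ × ℝ →L[ℝ] ℝ × ℝ)
      (K0, x0) := by
    have a1 : HasStrictFDerivAt (fun q : ℝ × ℝ => q.1) (ContinuousLinearMap.fst ℝ ℝ ℝ) (K0, x0) :=
      hasStrictFDerivAt_fst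
    have a2 : HasStrictFDerivAt (fun q : ℝ × ℝ => q.2) (ContinuousLinearMap.snd ℝ ℝ ℝ) (K0, x0) :=
      hasStrictFDerivAt_snd
    have a3 := HasStrictDerivAt.comp_hasStrictFDerivAt (h₂ := V) (f := fun q : ℝ × ℝ => q.2) (K0, x0) hV a2
    have a4 := a1.prodMk ((a1.mul a2).sub a3)
    refine a4.congr_fderiv ?_
    ext <;> simp [e, f1]
  have hg : ∀ᶠ q : ℝ × ℝ in 𝓝 (K0, x0),
      (fun p : ℝ × ℝ => (p.1, U p.1 p.2)) ((fun q : ℝ × ℝ => (q.1, q.1 * q.2 - V q.2)) q) = q := by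
    filter_upwards [h] with q hq
    ext
    · rfl
    · exact hq
  have := hΨ.to_local_left_inverse (g := fun p : ℝ × ℝ => (p.1, U p.1 p.2)) hg
  exact ⟨_, (hasStrictFDerivAt_snd (p := ((K0, U K0 (K0 * x0 - V x0)))) ).comp _ this⟩

variable {V V' : ℝ → ℝ} {UM : ℝ} {uMx umx : ℝ → ℝ} {u1f u0f u2f : ℝ → ℝ → ℝ} 

theorem Ctx.u1smooth (X : Ctx V V' UM uMx umx) 
    (hz : ∀ K c, (K, c) ∈ D1 V V' UM uMx umx →
      ZerosD1 V K c (u1f K c) (u0f K c) (u2f K c)) :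
    ContDiffOn ℝ 1 (fun p : ℝ × ℝ => u1f p.1 p.2) (D1 V V' UM uMx umx) := by
  apply contDiffOn_of_strict X.isOpen
  rintro ⟨K0, c0⟩ hp
  obtain ⟨hK, hK', -, -⟩ := id hp
  simp only at hK hK'
  have hz0 := hz _ _ hp
  obtain ⟨q1, q2, q3, q4, q5⟩ := X.loc hK hK' hz0
  obtain ⟨o1, o2, o3⟩ := X.ord hK hK'
  have hc : K0 * u1f K0 c0 - V (u1f K0 c0) = c0 := (zero_iff (X.Kpos hK)).mp hz0.2.2.2.1
  have hV : ContDiffAt ℝ 1 V (u1f K0 c0) := X.C1V.contDiffAt (Ioi_mem_nhds q1)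
  have hcV' : ContinuousAt V' (u1f K0 c0) := (X.C1V'.contDiffAt (Ioi_mem_nhds q1)).continuousAt
  have hs : HasStrictDerivAt V (V' (u1f K0 c0)) (u1f K0 c0) := by
    have := hV.hasStrictDerivAt one_ne_zero
    rwa [(X.dV _ q1).deriv] at this
  have hlt := X.lt1 hK hK' q1.le q2
  have key := strict_inv (U := u1f) hs hlt (by
    have t1 : Tendsto (fun q : ℝ × ℝ => (q.1, q.1 * q.2 - V q.2)) (𝓝 (K0, u1f K0 c0))
        (𝓝 (K0, c0)) := by
      have : ContinuousAt (fun q : ℝ × ℝ => (q.1, q.1 * q.2 - V q.2)) (K0, u1f K0 c0) := by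
        have : ContinuousAt (fun q : ℝ × ℝ => V q.2) (K0, u1f K0 c0) :=
          ContinuousAt.comp (f := fun q : ℝ × ℝ => q.2) (g := V) hV.continuousAt continuousAt_snd
        fun_prop
      have h2 := this.tendsto
      simp only [hc] at h2
      exact h2
    have e1 := t1.eventually (X.isOpen.mem_nhds hp)
    have e2 : ∀ᶠ q : ℝ × ℝ in 𝓝 (K0, u1f K0 c0), 0 < q.2 :=
      (continuous_snd.tendsto (K0, u1f K0 c0)).eventually (lt_mem_nhds q1)
    have e3 : ∀ᶠ q : ℝ × ℝ in 𝓝 (K0, u1f K0 c0), q.2 < UM :=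
      (continuous_snd.tendsto (K0, u1f K0 c0)).eventually (gt_mem_nhds (q2.trans o2))
    have e4 : ∀ᶠ q : ℝ × ℝ in 𝓝 (K0, u1f K0 c0), V' q.2 < q.1 :=
      ContinuousAt.eventually_lt (ContinuousAt.comp (f := fun q : ℝ × ℝ => q.2) (g := V') hcV'
        continuousAt_snd) continuousAt_fst hlt
    filter_upwards [e1, e2, e3, e4] with q a1 a2 a3 a4
    exact (X.uniq1 a1.1 a1.2.1 (hz q.1 (q.1 * q.2 - V q.2) a1) a2 a3 a4 rfl).symm)
  rwa [hc] at key

theorem Ctx.u2smooth (X : Ctx V V' UM uMx umx) 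
    (hz : ∀ K c, (K, c) ∈ D1 V V' UM uMx umx →
      ZerosD1 V K c (u1f K c) (u0f K c) (u2f K c)) :
    ContDiffOn ℝ 1 (fun p : ℝ × ℝ => u2f p.1 p.2) (D1 V V' UM uMx umx) := by
  apply contDiffOn_of_strict X.isOpen
  rintro ⟨K0, c0⟩ hp
  obtain ⟨hK, hK', -, -⟩ := id hp
  simp only at hK hK'
  have hz0 := hz _ _ hp
  obtain ⟨q1, q2, q3, q4, q5⟩ := X.loc hK hK' hz0
  obtain ⟨o1, o2, o3⟩ := X.ord hK hK'
  have hpos : 0 < u2f K0 c0 := by linarith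
  have hc : K0 * u2f K0 c0 - V (u2f K0 c0) = c0 := (zero_iff (X.Kpos hK)).mp hz0.2.2.2.2.2.1
  have hV : ContDiffAt ℝ 1 V (u2f K0 c0) := X.C1V.contDiffAt (Ioi_mem_nhds hpos)
  have hcV' : ContinuousAt V' (u2f K0 c0) := (X.C1V'.contDiffAt (Ioi_mem_nhds hpos)).continuousAt
  have hs : HasStrictDerivAt V (V' (u2f K0 c0)) (u2f K0 c0) := by
    have := hV.hasStrictDerivAt one_ne_zero
    rwa [(X.dV _ hpos).deriv] at this
  have hlt := X.lt3 hK hK' q5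
  have key := strict_inv (U := u2f) hs hlt (by
    have t1 : Tendsto (fun q : ℝ × ℝ => (q.1, q.1 * q.2 - V q.2)) (𝓝 (K0, u2f K0 c0))
        (𝓝 (K0, c0)) := by
      have : ContinuousAt (fun q : ℝ × ℝ => (q.1, q.1 * q.2 - V q.2)) (K0, u2f K0 c0) := by
        have : ContinuousAt (fun q : ℝ × ℝ => V q.2) (K0, u2f K0 c0) :=
          ContinuousAt.comp (f := fun q : ℝ × ℝ => q.2) (g := V) hV.continuousAt continuousAt_snd
        fun_prop
      have h2 := this.tendsto
      simp only [hc] at h2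
      exact h2
    have e1 := t1.eventually (X.isOpen.mem_nhds hp)
    have e3 : ∀ᶠ q : ℝ × ℝ in 𝓝 (K0, u2f K0 c0), UM < q.2 :=
      (continuous_snd.tendsto (K0, u2f K0 c0)).eventually (lt_mem_nhds (o3.trans q5))
    have e4 : ∀ᶠ q : ℝ × ℝ in 𝓝 (K0, u2f K0 c0), V' q.2 < q.1 :=
      ContinuousAt.eventually_lt (ContinuousAt.comp (f := fun q : ℝ × ℝ => q.2) (g := V') hcV'
        continuousAt_snd) continuousAt_fst hlt
    filter_upwards [e1, e3, e4] with q a1 a3 a4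
    exact (X.uniq2 a1.1 a1.2.1 (hz q.1 (q.1 * q.2 - V q.2) a1) a3 a4 rfl).symm)
  rwa [hc] at key

end

section
open Topology

structure WProf (a b : ℝ → ℝ) (x1 x2 : ℝ) (W : ℝ → ℝ) : Prop where
  cont : ContinuousOn W (Icc x1 x2)
  z1 : W x1 = 0
  z2 : W x2 = 0
  pos : ∀ x ∈ Ioo x1 x2, 0 < W x
  der : ∀ x ∈ Ioo x1 x2, HasDerivAt W (a x / W x + b x) x

theorem orbit {u w a b : ℝ → ℝ} {x1 x2 : ℝ} (hu : ∀ z, HasDerivAt u (w z) z)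
    (hw : ∀ z, HasDerivAt w (a (u z) + b (u z) * w z) z) (hpos : ∀ z, 0 < w z)
    (l1 : Tendsto u atBot (𝓝 x1)) (l2 : Tendsto u atTop (𝓝 x2))
    (m1 : Tendsto w atBot (𝓝 0)) (m2 : Tendsto w atTop (𝓝 0)) :
    ∃ W, WProf a b x1 x2 W := by
  classical
  have hmono : StrictMono u := strictMono_of_deriv_pos fun z => by rw [(hu z).deriv]; exact hpos z
  have cu : Continuous u := continuous_iff_continuousAt.mpr fun z => (hu z).continuousAt
  have cw : Continuous w := continuous_iff_continuousAt.mpr fun z => (hw z).continuousAt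
  have g1 : ∀ z, x1 < u z := fun z => lt_of_le_of_lt
    (hmono.monotone.le_of_tendsto l1 (z - 1)) (hmono (by linarith))
  have g2 : ∀ z, u z < x2 := fun z => lt_of_lt_of_le (hmono (by linarith : z < z + 1))
    (hmono.monotone.ge_of_tendsto l2 (z + 1)) 
  have surj : ∀ x ∈ Ioo x1 x2, ∃ z, u z = x := by
    intro x hx
    obtain ⟨z1, h1⟩ := (l1.eventually (gt_mem_nhds hx.1)).exists
    obtain ⟨z2, h2⟩ := (l2.eventually (lt_mem_nhds hx.2)).exists
    obtain ⟨z, hz⟩ := mem_range_of_exists_le_of_exists_ge cu ⟨z1, h1.le⟩ ⟨z2, h2.le⟩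
    exact ⟨z, hz⟩
  set g := Function.invFun u with hg
  have gu : ∀ z, g (u z) = z := Function.leftInverse_invFun hmono.injective
  let W : ℝ → ℝ := fun x => if x ∈ Ioo x1 x2 then w (g x) else 0
  have Wu : ∀ z, W (u z) = w z := by
    intro z
    simp only [W]
    rw [if_pos ⟨g1 z, g2 z⟩, gu]
  have W1 : W x1 = 0 := by simp [W]
  have W2 : W x2 = 0 := by simp [W]
  have der : ∀ x ∈ Ioo x1 x2, HasDerivAt W (a x / W x + b x) x := by
    intro x hx
    obtain ⟨z, rfl⟩ := surj x hx
    have s1 : HasStrictDerivAt u (w z) z :=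
      hasStrictDerivAt_of_hasDerivAt_of_continuousAt (Eventually.of_forall hu) cw.continuousAt
    have s2 := (s1.to_local_left_inverse (hpos z).ne' (g := g)
      (Eventually.of_forall gu)).hasDerivAt
    have s3 : HasDerivAt (w ∘ g) ((a (u z) + b (u z) * w z) * (w z)⁻¹) (u z) := by
      apply HasDerivAt.comp _ _ s2
      rw [gu]; exact hw z
    have s4 : W =ᶠ[𝓝 (u z)] w ∘ g := by
      filter_upwards [isOpen_Ioo.mem_nhds hx] with y hy
      simp only [W]
      rw [if_pos hy]; rfl
    have s5 := s3.congr_of_eventuallyEq s4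
    rw [Wu]
    refine s5.congr_deriv ?_
    have := (hpos z).ne'
    field_simp
  refine ⟨W, ?_, W1, W2, ?_, der⟩
  · have hlt : x1 < x2 := (g1 0).trans (g2 0)
    intro x hx
    rcases hx.1.eq_or_lt with h | h
    · subst h
      rw [ContinuousWithinAt, W1, Metric.tendsto_nhds]
      intro ε hε
      obtain ⟨Z, hZ⟩ := eventually_atBot.mp (m1.eventually (gt_mem_nhds hε))
      filter_upwards [self_mem_nhdsWithin, mem_nhdsWithin_of_mem_nhds (gt_mem_nhds (g1 Z))] with y hy hy'
      rcases hy.1.eq_or_lt with h | h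
      · rw [← h, W1, dist_self]; exact hε
      · obtain ⟨z, rfl⟩ := surj y ⟨h, hy'.trans (g2 Z)⟩
        rw [Wu, Real.dist_eq, sub_zero, abs_of_pos (hpos z)]
        exact hZ z (hmono.lt_iff_lt.mp hy').le
    rcases hx.2.eq_or_lt with h' | h'
    · subst h'
      rw [ContinuousWithinAt, W2, Metric.tendsto_nhds]
      intro ε hε
      obtain ⟨Z, hZ⟩ := eventually_atTop.mp (m2.eventually (gt_mem_nhds hε))
      filter_upwards [self_mem_nhdsWithin, mem_nhdsWithin_of_mem_nhds (lt_mem_nhds (g2 Z))] with y hy hy'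
      rcases hy.2.eq_or_lt with h | h
      · rw [h, W2, dist_self]; exact hε
      · obtain ⟨z, rfl⟩ := surj y ⟨(g1 Z).trans hy', h⟩
        rw [Wu, Real.dist_eq, sub_zero, abs_of_pos (hpos z)]
        exact hZ z (hmono.lt_iff_lt.mp hy').le
    · exact (der x ⟨h, h'⟩).continuousAt.continuousWithinAt
  · intro x hx
    obtain ⟨z, rfl⟩ := surj x hx
    rw [Wu]; exact hpos z

/-- orbits of (HE1) -/
theorem prof_b {V V' κ : ℝ → ℝ} {τ K c μ x1 x2 : ℝ} (h : HasHE1 V V' κ τ K c μ x1 x2) :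
    ∃ W, WProf (fun x => g1TV κ τ x * fTV V K c x)
      (fun x => g2TV κ τ x * (1 * fdTV V' K x + 1 * μ)) x1 x2 W := by
  obtain ⟨u, w, ⟨h1, h2⟩, -, h3, h4, h5, h6, h7⟩ := h
  refine orbit h1 (fun z => ?_) h7 h3 h4 h5 h6
  convert h2 z using 1
  rw [hTV]; ring

theorem prof_f {V V' κ : ℝ → ℝ} {τ K c μ x1 x2 : ℝ} (h : HasHE2 V V' κ τ K c μ x1 x2) :
    ∃ W, WProf (fun x => g1TV κ τ x * fTV V K c x)
      (fun x => g2TV κ τ x * ((-1) * fdTV V' K x + (-1) * μ)) x1 x2 W := by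
  obtain ⟨u, w, ⟨h1, h2⟩, -, h3, h4, h5, h6, h7⟩ := h
  refine orbit (u := fun z => u (-z)) (w := fun z => - w (-z)) ?_ (fun z => ?_)
    (fun z => by linarith [h7 (-z)])
    (h4.comp tendsto_neg_atBot_atTop) (h3.comp tendsto_neg_atTop_atBot) ?_ ?_
  · intro z
    have := (h1 (-z)).scomp z (hasDerivAt_neg z)
    simpa using! this
  · have := ((h2 (-z)).scomp z (hasDerivAt_neg z)).neg
    refine this.congr_deriv ?_
    rw [hTV]; simp; ring
  · simpa using! (h6.comp tendsto_neg_atBot_atTop).neg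
  · simpa using! (h5.comp tendsto_neg_atTop_atBot).neg

theorem WProf.resc {a b : ℝ → ℝ} {x1 x2 : ℝ} {W : ℝ → ℝ} (h : WProf a b x1 x2 W) (hlt : x1 < x2) :
    Prof (fun s => (x2 - x1) * a (x1 + (x2 - x1) * s)) (fun s => (x2 - x1) * b (x1 + (x2 - x1) * s))
      (fun s => W (x1 + (x2 - x1) * s)) := by
  have hL : 0 < x2 - x1 := by linarith
  have mI : ∀ s ∈ Ioo (0:ℝ) 1, x1 + (x2 - x1) * s ∈ Ioo x1 x2 := by
    intro s hs
    constructor <;> nlinarith [hs.1, hs.2]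
  constructor
  · apply h.cont.comp (by fun_prop)
    intro s hs
    constructor <;> nlinarith [hs.1, hs.2]
  · simp [h.z1]
  · simp [h.z2]
  · intro s hs; exact h.pos _ (mI s hs)
  · intro s hs
    have h1 : HasDerivAt (fun s => x1 + (x2 - x1) * s) (x2 - x1) s := by
      simpa using ((hasDerivAt_id s).const_mul (x2 - x1)).const_add x1
    have := (h.der _ (mI s hs)).comp s h1
    refine this.congr_deriv ?_
    ring

end

section
open Topology

theorem unif_lip {H : (ℝ × ℝ) × ℝ → ℝ} {p0 : ℝ × ℝ}
    (h : ∀ s ∈ Icc (0:ℝ) 1, ContDiffAt ℝ 1 H (p0, s)) :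
    ∃ C ≥ 0, ∃ t ∈ 𝓝 p0, ∀ s ∈ Icc (0:ℝ) 1, ∀ p ∈ t, |H (p, s)| ≤ C ∧
      ∀ q ∈ t, |H (p, s) - H (q, s)| ≤ C * ‖p - q‖ := by
  refine isCompact_Icc.induction_on (s := Icc (0:ℝ) 1)
    (p := fun S => ∃ C ≥ (0:ℝ), ∃ t ∈ 𝓝 p0, ∀ s ∈ S, ∀ p ∈ t, |H (p, s)| ≤ C ∧
      ∀ q ∈ t, |H (p, s) - H (q, s)| ≤ C * ‖p - q‖) ?_ ?_ ?_ ?_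
  · exact ⟨0, le_refl _, univ, univ_mem, by simp⟩
  · rintro S T hST ⟨C, hC, t, ht, h1⟩
    exact ⟨C, hC, t, ht, fun s hs => h1 s (hST hs)⟩
  · rintro S T ⟨C, hC, t, ht, h1⟩ ⟨C', hC', t', ht', h1'⟩
    refine ⟨C + C', by linarith, t ∩ t', inter_mem ht ht', ?_⟩
    rintro s (hs | hs) p ⟨hp, hp'⟩
    · refine ⟨by linarith [(h1 s hs p hp).1], fun q hq => ((h1 s hs p hp).2 q hq.1).trans ?_⟩
      exact mul_le_mul_of_nonneg_right (by linarith) (norm_nonneg _)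
    · refine ⟨by linarith [(h1' s hs p hp').1], fun q hq => ((h1' s hs p hp').2 q hq.2).trans ?_⟩
      exact mul_le_mul_of_nonneg_right (by linarith) (norm_nonneg _)
  · intro s hs
    obtain ⟨C, T, hT, hL⟩ := (h s hs).exists_lipschitzOnWith
    have hb : ∀ᶠ x in 𝓝 (p0, s), |H x| < |H (p0, s)| + 1 :=
      (h s hs).continuousAt.abs.eventually (gt_mem_nhds (lt_add_one _))
    have hT' := inter_mem hT hb
    rw [nhds_prod_eq, mem_prod_iff] at hT'
    obtain ⟨t, ht, r, hr, hsub⟩ := hT'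
    refine ⟨r, mem_nhdsWithin_of_mem_nhds hr, C + (|H (p0, s)| + 1), by positivity, t, ht, ?_⟩
    intro x hx p hp
    have m1 := hsub (mk_mem_prod hp hx)
    have hC : (0:ℝ) ≤ C := C.2
    have m1b : |H (p, x)| < |H (p0, s)| + 1 := m1.2
    refine ⟨by linarith, fun q hq => ?_⟩
    have m2 := hsub (mk_mem_prod hq hx)
    have := hL.dist_le_mul _ m1.1 _ m2.1
    rw [Real.dist_eq] at this
    refine this.trans ?_
    have e : dist (p, x) (q, x) = ‖p - q‖ := by
      rw [Prod.dist_eq, dist_self, max_eq_left dist_nonneg, dist_eq_norm]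
    rw [e]
    apply mul_le_mul_of_nonneg_right _ (norm_nonneg _)
    have := abs_nonneg (H (p0, s))
    linarith

theorem quot_of_strict {f : ℝ × ℝ → ℝ} {f' : ℝ × ℝ →L[ℝ] ℝ} {p0 : ℝ × ℝ}
    (h : HasStrictFDerivAt f f' p0) (e : ℝ × ℝ) :
    Tendsto (fun q : (ℝ × ℝ) × ℝ => (f (q.1 + q.2 • e) - f q.1) / q.2) (slF p0) (𝓝 (f' e)) := by
  have t1 : Tendsto (fun q : (ℝ × ℝ) × ℝ => (q.1 + q.2 • e, q.1)) (slF p0) (𝓝 (p0, p0)) := by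
    have : Continuous (fun q : (ℝ × ℝ) × ℝ => (q.1 + q.2 • e, q.1)) := by fun_prop
    have h2 := this.tendsto (p0, 0)
    simp only [zero_smul, add_zero] at h2
    exact h2.mono_left nhdsWithin_le_nhds
  have o1 := (hasStrictFDerivAt_iff_isLittleO.mp h).comp_tendsto t1
  have o2 : (fun q : (ℝ × ℝ) × ℝ => f (q.1 + q.2 • e) - f q.1 - q.2 * f' e) =o[slF p0]
      (fun q : (ℝ × ℝ) × ℝ => q.2) := by
    have b : (fun q : (ℝ × ℝ) × ℝ => q.2 • e) =O[slF p0] (fun q : (ℝ × ℝ) × ℝ => q.2) := by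
      apply Asymptotics.IsBigO.of_bound ‖e‖
      filter_upwards with q
      rw [norm_smul, mul_comm]
    have o3 := o1.trans_isBigO (k := fun q : (ℝ × ℝ) × ℝ => q.2) (by
      refine b.congr_left fun q => ?_
      simp)
    refine o3.congr_left fun q => ?_
    simp
  have o4 := o2.tendsto_div_nhds_zero.add_const (f' e)
  rw [zero_add] at o4
  refine o4.congr' ?_
  filter_upwards [self_mem_nhdsWithin] with q hq
  have hq : q.2 ≠ 0 := hq
  field_simp
  ring

theorem Close.mono {ε ε' : ℝ} {d d' : Dat} (h : Close ε d d') (hε : ε ≤ ε') : Close ε' d d' := by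
  intro s hs
  obtain ⟨h1, h2, h3⟩ := h s hs
  have : 0 ≤ s * (1 - s) := mul_nonneg hs.1 (by linarith [hs.2])
  exact ⟨h1.trans (mul_le_mul_of_nonneg_right hε this), h2.trans hε, h3.trans hε⟩

theorem vanish_bound {φ ψ : ℝ → ℝ} {C : ℝ} (hd : ∀ s ∈ Icc (0:ℝ) 1, HasDerivAt φ (ψ s) s)
    (h0 : φ 0 = 0) (h1 : φ 1 = 0) (hψ : ∀ s ∈ Icc (0:ℝ) 1, |ψ s| ≤ C) :
    ∀ s ∈ Icc (0:ℝ) 1, |φ s| ≤ 2 * C * (s * (1 - s)) := by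
  intro s hs
  have key := fun x (hx : x ∈ Icc (0:ℝ) 1) =>
    (convex_Icc (0:ℝ) 1).norm_image_sub_le_of_norm_hasDerivWithin_le
    (fun s hs => (hd s hs).hasDerivWithinAt) (fun s hs => hψ s hs) hx hs
  have k0 := key 0 (by simp)
  have k1 := key 1 (by simp)
  rw [h0, sub_zero, sub_zero, Real.norm_eq_abs, Real.norm_eq_abs, abs_of_nonneg hs.1] at k0
  rw [h1, sub_zero, Real.norm_eq_abs, Real.norm_eq_abs, abs_sub_comm,
    abs_of_nonneg (by linarith [hs.2] : 0 ≤ 1 - s)] at k1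
  exact le_four_mul hs k0 k1

theorem low_near {φ : ℝ → ℝ} {d : ℝ} (h : HasDerivAt φ d 0) (h0 : φ 0 = 0) (hd : 0 < d) :
    ∃ e > 0, ∀ s ∈ Ioo 0 e, d / 2 * s ≤ φ s := by
  have h1 := (hasDerivAt_iff_isLittleO.mp h).def (half_pos hd)
  obtain ⟨e, he, h2⟩ := Metric.eventually_nhds_iff.mp h1
  refine ⟨e, he, fun s hs => ?_⟩
  have := h2 (y := s) (by rw [Real.dist_eq, sub_zero, abs_of_pos hs.1]; exact hs.2)
  rw [h0] at this
  simp only [sub_zero, smul_eq_mul, Real.norm_eq_abs, abs_of_pos hs.1] at this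
  have := (abs_le.mp this).1
  linarith

end

section
open Topology

def Lf (u1f u2f : ℝ → ℝ → ℝ) (p : ℝ × ℝ) : ℝ := u2f p.1 p.2 - u1f p.1 p.2

def Uf (u1f u2f : ℝ → ℝ → ℝ) (p : ℝ × ℝ) (s : ℝ) : ℝ :=
  u1f p.1 p.2 + (u2f p.1 p.2 - u1f p.1 p.2) * s

/-- `φ(p,s) = f_p(U(p,s))` -/
def phF (V : ℝ → ℝ) (u1f u2f : ℝ → ℝ → ℝ) (p : ℝ × ℝ) (s : ℝ) : ℝ :=
  fTV V p.1 p.2 (Uf u1f u2f p s)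

def psF (V' : ℝ → ℝ) (u1f u2f : ℝ → ℝ → ℝ) (p : ℝ × ℝ) (s : ℝ) : ℝ :=
  Lf u1f u2f p * fdTV V' p.1 (Uf u1f u2f p s)

def G1F (κ : ℝ → ℝ) (τ : ℝ) (u1f u2f : ℝ → ℝ → ℝ) (p : ℝ × ℝ) (s : ℝ) : ℝ :=
  Lf u1f u2f p * g1TV κ τ (Uf u1f u2f p s)

def BF (κ : ℝ → ℝ) (τ : ℝ) (u1f u2f : ℝ → ℝ → ℝ) (p : ℝ × ℝ) (s : ℝ) : ℝ :=
  Lf u1f u2f p * g2TV κ τ (Uf u1f u2f p s)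

def AF (V' κ : ℝ → ℝ) (τ : ℝ) (u1f u2f : ℝ → ℝ → ℝ) (σ : ℝ) (p : ℝ × ℝ) (s : ℝ) : ℝ :=
  BF κ τ u1f u2f p s * (σ * fdTV V' p.1 (Uf u1f u2f p s))

def datF (V V' κ : ℝ → ℝ) (τ : ℝ) (u1f u2f : ℝ → ℝ → ℝ) (σ : ℝ) (m : ℝ → ℝ → ℝ)
    (W : ℝ → ℝ → ℝ → ℝ) (p : ℝ × ℝ) : Dat where
  F := fun s => G1F κ τ u1f u2f p s * phF V u1f u2f p s
  A := AF V' κ τ u1f u2f σ p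
  B := BF κ τ u1f u2f p
  ω := fun s => W p.1 p.2 (Uf u1f u2f p s)
  m := m p.1 p.2

structure Sys (V V' κ : ℝ → ℝ) (τ UM : ℝ) (uMx umx : ℝ → ℝ) (u1f u0f u2f : ℝ → ℝ → ℝ) (σ : ℝ)
    (m : ℝ → ℝ → ℝ) (W : ℝ → ℝ → ℝ → ℝ) : Prop where
  X : Ctx V V' UM uMx umx
  hκ : A2 κ
  hτ : 0 < τ
  hz : ∀ K c, (K, c) ∈ D1 V V' UM uMx umx → ZerosD1 V K c (u1f K c) (u0f K c) (u2f K c)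
  hW : ∀ K c, (K, c) ∈ D1 V V' UM uMx umx → WProf (fun x => g1TV κ τ x * fTV V K c x)
      (fun x => g2TV κ τ x * (σ * fdTV V' K x + m K c)) (u1f K c) (u2f K c) (W K c)

variable {V V' κ : ℝ → ℝ} {τ UM : ℝ} {uMx umx : ℝ → ℝ} {u1f u0f u2f : ℝ → ℝ → ℝ} {σ : ℝ}
    {m : ℝ → ℝ → ℝ} {W : ℝ → ℝ → ℝ → ℝ}

theorem g1_pos (hκ : A2 κ) (hτ : 0 < τ) {u : ℝ} (hu : 0 < u) : 0 < g1TV κ τ u := by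
  have := hκ.2 (1 / u) (by positivity)
  rw [g1TV]; positivity

theorem g2_pos (hκ : A2 κ) (hτ : 0 < τ) {u : ℝ} (hu : 0 < u) : 0 < g2TV κ τ u := by
  have := hκ.2 (1 / u) (by positivity)
  rw [g2TV]; positivity

theorem g2_eq (u : ℝ) : g2TV κ τ u = u / 2 * g1TV κ τ u := by
  rw [g2TV, g1TV, mul_assoc, div_mul_div_comm, mul_one]

theorem g1_smooth (hκ : A2 κ) (hτ : 0 < τ) {u : ℝ} (hu : 0 < u) :
    ContDiffAt ℝ 1 (g1TV κ τ) u := by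
  have h1 : 0 < 1 / u := by positivity
  have h2 : ContDiffAt ℝ 1 (fun u : ℝ => 1 / u) u := contDiffAt_const.div contDiffAt_id hu.ne'
  have h3 : ContDiffAt ℝ 1 (fun u : ℝ => κ (1 / u)) u :=
    ContDiffAt.comp (f := fun u : ℝ => 1 / u) (g := κ) u (hκ.1.contDiffAt (Ioi_mem_nhds h1)) h2
  exact contDiffAt_const.div (contDiffAt_const.mul h3) (mul_pos hτ (hκ.2 _ h1)).ne'

theorem g2_smooth (hκ : A2 κ) (hτ : 0 < τ) {u : ℝ} (hu : 0 < u) :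
    ContDiffAt ℝ 1 (g2TV κ τ) u := by
  have : g2TV κ τ = fun u => u / 2 * g1TV κ τ u := funext g2_eq
  rw [this]
  exact (contDiffAt_id.div_const 2).mul (g1_smooth hκ hτ hu)

namespace Sys
theorem lt12 (S : Sys V V' κ τ UM uMx umx u1f u0f u2f σ m W) {p : ℝ × ℝ} (hp : p ∈ D1 V V' UM uMx umx) :
    0 < u1f p.1 p.2 ∧ u1f p.1 p.2 < u2f p.1 p.2 := by
  obtain ⟨h1, h2, h3, -⟩ := S.hz p.1 p.2 hp
  exact ⟨h1, h2.trans h3⟩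

theorem Lpos (S : Sys V V' κ τ UM uMx umx u1f u0f u2f σ m W) {p : ℝ × ℝ} (hp : p ∈ D1 V V' UM uMx umx) : 0 < Lf u1f u2f p :=
  sub_pos.mpr (S.lt12 hp).2

theorem Kp (S : Sys V V' κ τ UM uMx umx u1f u0f u2f σ m W) {p : ℝ × ℝ} (hp : p ∈ D1 V V' UM uMx umx) : 0 < p.1 := S.X.Kpos hp.1

theorem Upos (S : Sys V V' κ τ UM uMx umx u1f u0f u2f σ m W) {p : ℝ × ℝ} (hp : p ∈ D1 V V' UM uMx umx) {s : ℝ} (hs : s ∈ Icc (0:ℝ) 1) :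
    0 < Uf u1f u2f p s := by
  obtain ⟨h1, h2⟩ := S.lt12 hp
  have := mul_nonneg (sub_pos.mpr h2).le hs.1
  rw [Uf]; linarith

theorem smL (S : Sys V V' κ τ UM uMx umx u1f u0f u2f σ m W) {p : ℝ × ℝ} (hp : p ∈ D1 V V' UM uMx umx) (s : ℝ) :
    ContDiffAt ℝ 1 (fun x : (ℝ × ℝ) × ℝ => Lf u1f u2f x.1) (p, s) := by
  have h1 := (S.X.u1smooth S.hz).contDiffAt (S.X.isOpen.mem_nhds hp)
  have h2 := (S.X.u2smooth S.hz).contDiffAt (S.X.isOpen.mem_nhds hp)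
  exact ContDiffAt.comp (f := fun x : (ℝ × ℝ) × ℝ => x.1) (g := Lf u1f u2f) (p, s) (h2.sub h1)
    contDiffAt_fst

theorem smU (S : Sys V V' κ τ UM uMx umx u1f u0f u2f σ m W) {p : ℝ × ℝ} (hp : p ∈ D1 V V' UM uMx umx) (s : ℝ) :
    ContDiffAt ℝ 1 (fun x : (ℝ × ℝ) × ℝ => Uf u1f u2f x.1 x.2) (p, s) := by
  have h1 := (S.X.u1smooth S.hz).contDiffAt (S.X.isOpen.mem_nhds hp)
  have h3 := ContDiffAt.comp (f := fun x : (ℝ × ℝ) × ℝ => x.1)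
    (g := fun p : ℝ × ℝ => u1f p.1 p.2) (p, s) h1 contDiffAt_fst
  exact h3.add ((S.smL hp s).mul contDiffAt_snd)

theorem smcomp (S : Sys V V' κ τ UM uMx umx u1f u0f u2f σ m W) {p : ℝ × ℝ} (hp : p ∈ D1 V V' UM uMx umx) {s : ℝ} {g : ℝ → ℝ}
    (hg : ContDiffAt ℝ 1 g (Uf u1f u2f p s)) :
    ContDiffAt ℝ 1 (fun x : (ℝ × ℝ) × ℝ => g (Uf u1f u2f x.1 x.2)) (p, s) :=
  ContDiffAt.comp (f := fun x : (ℝ × ℝ) × ℝ => Uf u1f u2f x.1 x.2) (g := g) (p, s) hg (S.smU hp s)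

theorem smK (p : ℝ × ℝ) (s : ℝ) : ContDiffAt ℝ 1 (fun x : (ℝ × ℝ) × ℝ => x.1.1) (p, s) :=
  (contDiff_fst.comp contDiff_fst).contDiffAt

theorem smc (p : ℝ × ℝ) (s : ℝ) : ContDiffAt ℝ 1 (fun x : (ℝ × ℝ) × ℝ => x.1.2) (p, s) :=
  (contDiff_snd.comp contDiff_fst).contDiffAt

theorem smph (S : Sys V V' κ τ UM uMx umx u1f u0f u2f σ m W) {p : ℝ × ℝ} (hp : p ∈ D1 V V' UM uMx umx) {s : ℝ} (hs : s ∈ Icc (0:ℝ) 1) :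
    ContDiffAt ℝ 1 (fun x : (ℝ × ℝ) × ℝ => phF V u1f u2f x.1 x.2) (p, s) := by
  have hV := S.smcomp hp (S.X.C1V.contDiffAt (Ioi_mem_nhds (S.Upos hp hs)))
  exact ((((smK p s).mul (S.smU hp s)).sub hV).sub (smc p s)).div (smK p s) (S.Kp hp).ne'

theorem smfd (S : Sys V V' κ τ UM uMx umx u1f u0f u2f σ m W) {p : ℝ × ℝ} (hp : p ∈ D1 V V' UM uMx umx) {s : ℝ} (hs : s ∈ Icc (0:ℝ) 1) :
    ContDiffAt ℝ 1 (fun x : (ℝ × ℝ) × ℝ => fdTV V' x.1.1 (Uf u1f u2f x.1 x.2)) (p, s) := by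
  have hV := S.smcomp hp (S.X.C1V'.contDiffAt (Ioi_mem_nhds (S.Upos hp hs)))
  exact ((smK p s).sub hV).div (smK p s) (S.Kp hp).ne'

theorem smps (S : Sys V V' κ τ UM uMx umx u1f u0f u2f σ m W) {p : ℝ × ℝ} (hp : p ∈ D1 V V' UM uMx umx) {s : ℝ} (hs : s ∈ Icc (0:ℝ) 1) :
    ContDiffAt ℝ 1 (fun x : (ℝ × ℝ) × ℝ => psF V' u1f u2f x.1 x.2) (p, s) :=
  (S.smL hp s).mul (S.smfd hp hs)

theorem smG1 (S : Sys V V' κ τ UM uMx umx u1f u0f u2f σ m W) {p : ℝ × ℝ} (hp : p ∈ D1 V V' UM uMx umx) {s : ℝ} (hs : s ∈ Icc (0:ℝ) 1) :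
    ContDiffAt ℝ 1 (fun x : (ℝ × ℝ) × ℝ => G1F κ τ u1f u2f x.1 x.2) (p, s) :=
  (S.smL hp s).mul (S.smcomp hp (g1_smooth S.hκ S.hτ (S.Upos hp hs)))

theorem smB (S : Sys V V' κ τ UM uMx umx u1f u0f u2f σ m W) {p : ℝ × ℝ} (hp : p ∈ D1 V V' UM uMx umx) {s : ℝ} (hs : s ∈ Icc (0:ℝ) 1) :
    ContDiffAt ℝ 1 (fun x : (ℝ × ℝ) × ℝ => BF κ τ u1f u2f x.1 x.2) (p, s) :=
  (S.smL hp s).mul (S.smcomp hp (g2_smooth S.hκ S.hτ (S.Upos hp hs)))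

theorem smA (S : Sys V V' κ τ UM uMx umx u1f u0f u2f σ m W) {p : ℝ × ℝ} (hp : p ∈ D1 V V' UM uMx umx) {s : ℝ} (hs : s ∈ Icc (0:ℝ) 1) :
    ContDiffAt ℝ 1 (fun x : (ℝ × ℝ) × ℝ => AF V' κ τ u1f u2f σ x.1 x.2) (p, s) :=
  (S.smB hp hs).mul (contDiffAt_const.mul (S.smfd hp hs))

theorem cs_of {H : ℝ × ℝ → ℝ → ℝ} {p : ℝ × ℝ}
    (h : ∀ s ∈ Icc (0:ℝ) 1, ContDiffAt ℝ 1 (fun x : (ℝ × ℝ) × ℝ => H x.1 x.2) (p, s)) :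
    ContinuousOn (H p) (Icc 0 1) := by
  intro s hs
  have : ContinuousAt ((fun x : (ℝ × ℝ) × ℝ => H x.1 x.2) ∘ (fun s : ℝ => (p, s))) s :=
    ContinuousAt.comp (h s hs).continuousAt (by fun_prop)
  exact this.continuousWithinAt

theorem strict_of {H : ℝ × ℝ → ℝ → ℝ} {p : ℝ × ℝ} {s : ℝ}
    (h : ContDiffAt ℝ 1 (fun x : (ℝ × ℝ) × ℝ => H x.1 x.2) (p, s)) :
    ∃ H' : ℝ × ℝ →L[ℝ] ℝ, HasStrictFDerivAt (fun p => H p s) H' p := by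
  have : ContDiffAt ℝ 1 ((fun x : (ℝ × ℝ) × ℝ => H x.1 x.2) ∘ (fun p : ℝ × ℝ => (p, s))) p :=
    ContDiffAt.comp p h (contDiffAt_id.prodMk contDiffAt_const)
  exact ⟨_, this.hasStrictFDerivAt one_ne_zero⟩

theorem dph (S : Sys V V' κ τ UM uMx umx u1f u0f u2f σ m W) {p : ℝ × ℝ} (hp : p ∈ D1 V V' UM uMx umx) {s : ℝ} (hs : s ∈ Icc (0:ℝ) 1) :
    HasDerivAt (phF V u1f u2f p) (psF V' u1f u2f p s) s := by
  have h1 : HasDerivAt (fun s => Uf u1f u2f p s) (Lf u1f u2f p) s := by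
    have := ((hasDerivAt_id s).const_mul (Lf u1f u2f p)).const_add (u1f p.1 p.2)
    rw [mul_one] at this
    exact this
  have h2 := (S.X.dV _ (S.Upos hp hs)).comp s h1
  have h3 := (((h1.const_mul p.1).sub h2).sub_const p.2).div_const p.1
  refine h3.congr_deriv ?_
  rw [psF, fdTV]; ring

theorem ph0 (S : Sys V V' κ τ UM uMx umx u1f u0f u2f σ m W) {p : ℝ × ℝ} (hp : p ∈ D1 V V' UM uMx umx) : phF V u1f u2f p 0 = 0 := by
  rw [phF, Uf, mul_zero, add_zero]; exact (S.hz p.1 p.2 hp).2.2.2.1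

theorem ph1 (S : Sys V V' κ τ UM uMx umx u1f u0f u2f σ m W) {p : ℝ × ℝ} (hp : p ∈ D1 V V' UM uMx umx) : phF V u1f u2f p 1 = 0 := by
  rw [phF, Uf, mul_one, add_sub_cancel]; exact (S.hz p.1 p.2 hp).2.2.2.2.2.1

theorem G1pos (S : Sys V V' κ τ UM uMx umx u1f u0f u2f σ m W) {p : ℝ × ℝ} (hp : p ∈ D1 V V' UM uMx umx) {s : ℝ} (hs : s ∈ Icc (0:ℝ) 1) :
    0 < G1F κ τ u1f u2f p s :=
  mul_pos (S.Lpos hp) (g1_pos S.hκ S.hτ (S.Upos hp hs))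

theorem good (S : Sys V V' κ τ UM uMx umx u1f u0f u2f σ m W) {p : ℝ × ℝ} (hp : p ∈ D1 V V' UM uMx umx) :
    Good (datF V V' κ τ u1f u2f σ m W p) := by
  have hL := S.Lpos hp
  have hz := S.hz p.1 p.2 hp
  have cG1 : ContinuousOn (G1F κ τ u1f u2f p) (Icc 0 1) := cs_of fun s hs => S.smG1 hp hs
  have cph : ContinuousOn (phF V u1f u2f p) (Icc 0 1) := cs_of fun s hs => S.smph hp hs
  refine ⟨?_, cG1.mul cph, cs_of fun s hs => S.smA hp hs, cs_of fun s hs => S.smB hp hs, ?_, ?_, ?_⟩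
  · have h1 := (S.hW p.1 p.2 hp).resc (S.lt12 hp).2
    have e1 : (datF V V' κ τ u1f u2f σ m W p).F = fun s => (u2f p.1 p.2 - u1f p.1 p.2) *
        (g1TV κ τ (u1f p.1 p.2 + (u2f p.1 p.2 - u1f p.1 p.2) * s) *
          fTV V p.1 p.2 (u1f p.1 p.2 + (u2f p.1 p.2 - u1f p.1 p.2) * s)) := by
      funext s
      simp only [datF, G1F, phF, Uf, Lf]; ring
    have e2 : (fun s => (datF V V' κ τ u1f u2f σ m W p).A s +
        (datF V V' κ τ u1f u2f σ m W p).m * (datF V V' κ τ u1f u2f σ m W p).B s) =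
        fun s => (u2f p.1 p.2 - u1f p.1 p.2) *
        (g2TV κ τ (u1f p.1 p.2 + (u2f p.1 p.2 - u1f p.1 p.2) * s) *
          (σ * fdTV V' p.1 (u1f p.1 p.2 + (u2f p.1 p.2 - u1f p.1 p.2) * s) + m p.1 p.2)) := by
      funext s
      simp only [datF, AF, BF, Uf, Lf]; ring
    rw [e1, e2]
    exact h1
  · have hlt := hz.2.1
    have hlt' := hz.2.2.1
    refine ⟨(u0f p.1 p.2 - u1f p.1 p.2) / Lf u1f u2f p, ⟨div_pos (by linarith) hL, ?_⟩, ?_, ?_⟩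
    · rw [div_lt_one hL, Lf]; linarith
    · intro s hs
      have h2 : s * Lf u1f u2f p < u0f p.1 p.2 - u1f p.1 p.2 := (lt_div_iff₀ hL).mp hs.2
      have h3 := mul_pos hs.1 hL
      have hs1 : s ∈ Icc (0:ℝ) 1 := ⟨hs.1.le, by
        have : s * Lf u1f u2f p ≤ 1 * Lf u1f u2f p := by rw [one_mul, Lf]; rw [Lf] at h2; linarith
        exact le_of_mul_le_mul_right this hL⟩
      refine (mul_pos (S.G1pos hp hs1) ?_).le
      apply S.X.fpos hp.1 hp.2.1 hz
      rw [Lf] at h2 h3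
      constructor <;> rw [Uf] <;> linarith
    · intro s hs
      have h2 : u0f p.1 p.2 - u1f p.1 p.2 < s * Lf u1f u2f p := (div_lt_iff₀ hL).mp hs.1
      have h3 : s * Lf u1f u2f p < 1 * Lf u1f u2f p := mul_lt_mul_of_pos_right hs.2 hL
      have hs1 : s ∈ Icc (0:ℝ) 1 := ⟨by
        have : 0 * Lf u1f u2f p ≤ s * Lf u1f u2f p := by linarith
        exact le_of_mul_le_mul_right this hL, hs.2.le⟩
      refine mul_nonpos_of_nonneg_of_nonpos (S.G1pos hp hs1).le (le_of_lt ?_)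
      apply S.X.fneg hp.1 hp.2.1 hz
      rw [Lf] at h2 h3
      constructor <;> rw [Uf] <;> linarith
  · intro s hs
    exact mul_pos hL (g2_pos S.hκ S.hτ (S.Upos hp hs))
  · obtain ⟨γ, hγ, hγ'⟩ := low_of_cont zero_le_one cG1 (fun s hs => S.G1pos hp hs)
    obtain ⟨q1, q2, q3, q4, q5⟩ := S.X.loc hp.1 hp.2.1 hz
    have d0 : 0 < psF V' u1f u2f p 0 := by
      rw [psF, Uf, mul_zero, add_zero, fdTV]
      exact mul_pos hL (div_pos (sub_pos.mpr (S.X.lt1 hp.1 hp.2.1 q1.le q2)) (S.Kp hp))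
    have d1 : 0 < psF V' u1f u2f p 1 := by
      rw [psF, Uf, mul_one, add_sub_cancel, fdTV]
      exact mul_pos hL (div_pos (sub_pos.mpr (S.X.lt3 hp.1 hp.2.1 q5)) (S.Kp hp))
    obtain ⟨e0, he0, l0⟩ := low_near (S.dph hp (s := 0) (by simp)) (S.ph0 hp) d0
    have hh : HasDerivAt (fun s => - phF V u1f u2f p (1 - s)) (psF V' u1f u2f p 1) 0 := by
      have h1 : HasDerivAt (fun s : ℝ => 1 - s) (-1) 0 := by
        simpa using (hasDerivAt_id (0:ℝ)).const_sub 1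
      have h2 : HasDerivAt (phF V u1f u2f p) (psF V' u1f u2f p 1) (1 - 0) := by
        rw [sub_zero]; exact S.dph hp (by simp)
      have := (h2.comp (0:ℝ) h1).neg
      refine this.congr_deriv (by ring)
    obtain ⟨e1, he1, l1⟩ := low_near hh (by rw [sub_zero, S.ph1 hp, neg_zero]) d1
    refine ⟨γ * (min (psF V' u1f u2f p 0) (psF V' u1f u2f p 1) / 2),
      mul_pos hγ (half_pos (lt_min d0 d1)), min (min e0 e1) (1/2),
      lt_min (lt_min he0 he1) (by norm_num), min_le_right _ _, ?_⟩
    intro s hs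
    have hs0 := hs.1
    have b1 : s < e0 := lt_of_lt_of_le hs.2 ((min_le_left _ _).trans (min_le_left _ _))
    have b2 : s < e1 := lt_of_lt_of_le hs.2 ((min_le_left _ _).trans (min_le_right _ _))
    have b3 : s < 1/2 := lt_of_lt_of_le hs.2 (min_le_right _ _)
    have hs1 : s ∈ Icc (0:ℝ) 1 := ⟨hs0.le, by linarith⟩
    have hs2 : 1 - s ∈ Icc (0:ℝ) 1 := ⟨by linarith, by linarith⟩
    have c1 := l0 s ⟨hs0, b1⟩
    have c2 := l1 s ⟨hs0, b2⟩
    set dd := min (psF V' u1f u2f p 0) (psF V' u1f u2f p 1) with hdd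
    have hdp : 0 < dd := lt_min d0 d1
    have c3 : dd / 2 * s ≤ psF V' u1f u2f p 0 / 2 * s :=
      mul_le_mul_of_nonneg_right (by linarith [min_le_left (psF V' u1f u2f p 0) (psF V' u1f u2f p 1)]) hs0.le
    have c4 : dd / 2 * s ≤ psF V' u1f u2f p 1 / 2 * s :=
      mul_le_mul_of_nonneg_right (by linarith [min_le_right (psF V' u1f u2f p 0) (psF V' u1f u2f p 1)]) hs0.le
    have hds : 0 ≤ dd / 2 * s := by positivity
    constructor
    · rw [mul_assoc]
      exact mul_le_mul (hγ' s hs1) (c3.trans c1) hds (S.G1pos hp hs1).le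
    · rw [mul_assoc]
      show γ * (dd / 2 * s) ≤ -(G1F κ τ u1f u2f p (1 - s) * phF V u1f u2f p (1 - s))
      rw [← mul_neg]
      exact mul_le_mul (hγ' _ hs2) (c4.trans c2) hds (S.G1pos hp hs2).le

end Sys
end

section
open Topology

variable {V V' κ : ℝ → ℝ} {τ UM : ℝ} {uMx umx : ℝ → ℝ} {u1f u0f u2f : ℝ → ℝ → ℝ} {σ : ℝ}
    {m : ℝ → ℝ → ℝ} {W : ℝ → ℝ → ℝ → ℝ}

theorem Sys.lip (S : Sys V V' κ τ UM uMx umx u1f u0f u2f σ m W) {p0 : ℝ × ℝ}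
    (hp0 : p0 ∈ D1 V V' UM uMx umx) :
    ∃ C ≥ 0, ∃ t ∈ 𝓝 p0, t ⊆ D1 V V' UM uMx umx ∧ ∀ p ∈ t, ∀ q ∈ t,
      Close (C * ‖p - q‖) (datF V V' κ τ u1f u2f σ m W p) (datF V V' κ τ u1f u2f σ m W q) := by
  obtain ⟨C1, hC1, t1, ht1, l1⟩ := unif_lip fun s hs => S.smps hp0 hs
  obtain ⟨C2, hC2, t2, ht2, l2⟩ := unif_lip fun s hs => S.smG1 hp0 hs
  obtain ⟨C3, hC3, t3, ht3, l3⟩ := unif_lip fun s hs => S.smA hp0 hs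
  obtain ⟨C4, hC4, t4, ht4, l4⟩ := unif_lip fun s hs => S.smB hp0 hs
  refine ⟨4 * C1 * C2 + C3 + C4, by positivity, D1 V V' UM uMx umx ∩ (t1 ∩ (t2 ∩ (t3 ∩ t4))),
    inter_mem (S.X.isOpen.mem_nhds hp0) (inter_mem ht1 (inter_mem ht2 (inter_mem ht3 ht4))),
    inter_subset_left, ?_⟩
  rintro p ⟨hp, hp1, hp2, hp3, hp4⟩ q ⟨hq, hq1, hq2, hq3, hq4⟩ s hs
  have hn := norm_nonneg (p - q)
  have hss : 0 ≤ s * (1 - s) := mul_nonneg hs.1 (by linarith [hs.2])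
  have h12 := mul_nonneg (mul_nonneg hC1 hC2) hn
  have h3 := mul_nonneg hC3 hn
  have h4 := mul_nonneg hC4 hn
  refine ⟨?_, ?_, ?_⟩
  · have a1 : |phF V u1f u2f p s - phF V u1f u2f q s| ≤ 2 * (C1 * ‖p - q‖) * (s * (1 - s)) := by
      refine vanish_bound (φ := fun s => phF V u1f u2f p s - phF V u1f u2f q s)
        (fun s hs => (S.dph hp hs).sub (S.dph hq hs)) ?_ ?_ (fun s hs => (l1 s hs p hp1).2 q hq1) s hs
      · simp only [S.ph0 hp, S.ph0 hq, sub_zero]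
      · simp only [S.ph1 hp, S.ph1 hq, sub_zero]
    have a2 : |phF V u1f u2f q s| ≤ 2 * C1 * (s * (1 - s)) :=
      vanish_bound (fun s hs => S.dph hq hs) (S.ph0 hq) (S.ph1 hq) (fun s hs => (l1 s hs q hq1).1) s hs
    have a3 := (l2 s hs p hp2).1
    have a4 := (l2 s hs p hp2).2 q hq2
    simp only at a3 a4
    have e : (datF V V' κ τ u1f u2f σ m W p).F s - (datF V V' κ τ u1f u2f σ m W q).F s =
        G1F κ τ u1f u2f p s * (phF V u1f u2f p s - phF V u1f u2f q s) +
        (G1F κ τ u1f u2f p s - G1F κ τ u1f u2f q s) * phF V u1f u2f q s := by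
      simp only [datF]; ring
    rw [e]
    refine (abs_add_le _ _).trans ?_
    rw [abs_mul, abs_mul]
    have b1 := mul_le_mul a3 a1 (abs_nonneg _) hC2
    have b2 := mul_le_mul a4 a2 (abs_nonneg _) (mul_nonneg hC2 hn)
    have b3 := mul_nonneg h3 hss
    have b4 := mul_nonneg h4 hss
    nlinarith
  · have := (l3 s hs p hp3).2 q hq3
    refine le_trans this ?_
    nlinarith
  · have := (l4 s hs p hp4).2 q hq4
    refine le_trans this ?_
    nlinarith

theorem Sys.slope (S : Sys V V' κ τ UM uMx umx u1f u0f u2f σ m W) {p0 : ℝ × ℝ}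
    (hp0 : p0 ∈ D1 V V' UM uMx umx) {e : ℝ × ℝ} (he : ‖e‖ = 1) :
    ∃ a, Tendsto (fun q : (ℝ × ℝ) × ℝ => (m (q.1 + q.2 • e).1 (q.1 + q.2 • e).2 - m q.1.1 q.1.2) / q.2)
      (slF p0) (𝓝 a) := by
  obtain ⟨C, hC, t, ht, htD, hcl⟩ := S.lip hp0
  have hp0t : p0 ∈ t := mem_of_mem_nhds ht
  have t1 : Tendsto (fun q : (ℝ × ℝ) × ℝ => q.1) (slF p0) (𝓝 p0) :=
    (continuous_fst.tendsto (p0, (0:ℝ))).mono_left nhdsWithin_le_nhds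
  have t2 : Tendsto (fun q : (ℝ × ℝ) × ℝ => q.1 + q.2 • e) (slF p0) (𝓝 p0) := by
    have : Continuous (fun q : (ℝ × ℝ) × ℝ => q.1 + q.2 • e) := by fun_prop
    have h2 := this.tendsto (p0, 0)
    simp only [zero_smul, add_zero] at h2
    exact h2.mono_left nhdsWithin_le_nhds
  have e1 := t1.eventually ht
  have e2 := t2.eventually ht
  obtain ⟨F', hF'⟩ : ∃ F' : ℝ → (ℝ × ℝ →L[ℝ] ℝ), ∀ s ∈ Ioo (0:ℝ) 1,
      HasStrictFDerivAt (fun p => G1F κ τ u1f u2f p s * phF V u1f u2f p s) (F' s) p0 := by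
    have : ∀ s, ∃ F' : ℝ × ℝ →L[ℝ] ℝ, s ∈ Ioo (0:ℝ) 1 →
        HasStrictFDerivAt (fun p => G1F κ τ u1f u2f p s * phF V u1f u2f p s) F' p0 := by
      intro s
      by_cases hs : s ∈ Ioo (0:ℝ) 1
      · have hs' := Ioo_subset_Icc_self hs
        obtain ⟨G, hG⟩ := strict_of (H := fun p s => G1F κ τ u1f u2f p s * phF V u1f u2f p s)
          ((S.smG1 hp0 hs').mul (S.smph hp0 hs'))
        exact ⟨G, fun _ => hG⟩
      · exact ⟨0, fun h => absurd h hs⟩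
    choose F' hF' using this
    exact ⟨F', hF'⟩
  obtain ⟨A', hA'⟩ : ∃ A' : ℝ → (ℝ × ℝ →L[ℝ] ℝ), ∀ s ∈ Ioo (0:ℝ) 1,
      HasStrictFDerivAt (fun p => AF V' κ τ u1f u2f σ p s) (A' s) p0 := by
    have : ∀ s, ∃ F' : ℝ × ℝ →L[ℝ] ℝ, s ∈ Ioo (0:ℝ) 1 →
        HasStrictFDerivAt (fun p => AF V' κ τ u1f u2f σ p s) F' p0 := by
      intro s
      by_cases hs : s ∈ Ioo (0:ℝ) 1
      · obtain ⟨G, hG⟩ := strict_of (H := AF V' κ τ u1f u2f σ) (S.smA hp0 (Ioo_subset_Icc_self hs))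
        exact ⟨G, fun _ => hG⟩
      · exact ⟨0, fun h => absurd h hs⟩
    choose F' hF' using this
    exact ⟨F', hF'⟩
  obtain ⟨B', hB'⟩ : ∃ B' : ℝ → (ℝ × ℝ →L[ℝ] ℝ), ∀ s ∈ Ioo (0:ℝ) 1,
      HasStrictFDerivAt (fun p => BF κ τ u1f u2f p s) (B' s) p0 := by
    have : ∀ s, ∃ F' : ℝ × ℝ →L[ℝ] ℝ, s ∈ Ioo (0:ℝ) 1 →
        HasStrictFDerivAt (fun p => BF κ τ u1f u2f p s) F' p0 := by
      intro s
      by_cases hs : s ∈ Ioo (0:ℝ) 1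
      · obtain ⟨G, hG⟩ := strict_of (H := BF κ τ u1f u2f) (S.smB hp0 (Ioo_subset_Icc_self hs))
        exact ⟨G, fun _ => hG⟩
      · exact ⟨0, fun h => absurd h hs⟩
    choose F' hF' using this
    exact ⟨F', hF'⟩
  refine main_limit (l := slF p0) (S.good hp0)
    (d := fun q : (ℝ × ℝ) × ℝ => datF V V' κ τ u1f u2f σ m W q.1)
    (dt := fun q : (ℝ × ℝ) × ℝ => datF V V' κ τ u1f u2f σ m W (q.1 + q.2 • e))
    (δ := fun q => q.2) (ε := fun q => C * ‖q.1 - p0‖ + C * ‖q.1 + q.2 • e - p0‖) (C := C)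
    (F' := fun s => F' s e) (A' := fun s => A' s e) (B' := fun s => B' s e)
    ?_ ?_ ?_ ?_ ?_ ?_ ?_ ?_ ?_ ?_
  · filter_upwards [e1] with q hq using S.good (htD hq)
  · filter_upwards [e2] with q hq using S.good (htD hq)
  · have a1 := ((tendsto_iff_norm_sub_tendsto_zero.mp t1).const_mul C).add
      ((tendsto_iff_norm_sub_tendsto_zero.mp t2).const_mul C)
    simpa using a1
  · filter_upwards [self_mem_nhdsWithin] with q hq using hq
  · filter_upwards [e1] with q hq
    exact (hcl _ hq _ hp0t).mono (le_add_of_nonneg_right (mul_nonneg hC (norm_nonneg _)))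
  · filter_upwards [e2] with q hq
    exact (hcl _ hq _ hp0t).mono (le_add_of_nonneg_left (mul_nonneg hC (norm_nonneg _)))
  · filter_upwards [e1, e2] with q hq hq'
    refine (hcl _ hq' _ hq).mono (le_of_eq ?_)
    rw [add_sub_cancel_left, norm_smul, he, mul_one, Real.norm_eq_abs]
  · intro s hs; exact quot_of_strict (hF' s hs) e
  · intro s hs; exact quot_of_strict (hA' s hs) e
  · intro s hs; exact quot_of_strict (hB' s hs) e

theorem Sys.smooth (S : Sys V V' κ τ UM uMx umx u1f u0f u2f σ m W) :
    ContDiffOn ℝ 1 (fun p : ℝ × ℝ => m p.1 p.2) (D1 V V' UM uMx umx) := by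
  apply contDiffOn_of_strict S.X.isOpen
  intro p hp
  obtain ⟨a, ha⟩ := S.slope hp (e := (1, 0)) (by simp [Prod.norm_def])
  obtain ⟨b, hb⟩ := S.slope hp (e := (0, 1)) (by simp [Prod.norm_def])
  exact strict_of_slopes ha hb

end

section
open Topology

variable {V V' κ : ℝ → ℝ} {τ UM : ℝ} {uMx umx : ℝ → ℝ} {u1f u0f u2f : ℝ → ℝ → ℝ} {σ : ℝ}
    {m : ℝ → ℝ → ℝ} {W : ℝ → ℝ → ℝ → ℝ}

theorem first_crossing {D D' : ℝ → ℝ} {a b : ℝ} (hab : a < b) (hc : ContinuousOn D (Icc a b))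
    (ha : D a < 0) (hb : 0 < D b) (hd : ∀ x ∈ Ioo a b, HasDerivAt D (D' x) x) :
    ∃ x ∈ Ioo a b, D x = 0 ∧ 0 ≤ D' x := by
  have hS : IsCompact (Icc a b ∩ D ⁻¹' (Ici 0)) :=
    (isCompact_Icc).of_isClosed_subset (hc.preimage_isClosed_of_isClosed isClosed_Icc isClosed_Ici)
      inter_subset_left
  obtain ⟨s, ⟨hs, hs0⟩, hmin⟩ := hS.exists_isLeast ⟨b, right_mem_Icc.2 hab.le, hb.le⟩
  have hs0 : 0 ≤ D s := hs0
  have hlt : ∀ y ∈ Ico a s, D y < 0 := by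
    intro y hy
    by_contra! h
    exact absurd (hmin ⟨⟨hy.1, hy.2.le.trans hs.2⟩, h⟩) (not_le.2 hy.2)
  have has : a < s := lt_of_le_of_ne hs.1 (by rintro rfl; linarith)
  obtain ⟨y, hy, hy0⟩ := intermediate_value_Icc hs.1 (hc.mono (Icc_subset_Icc_right hs.2))
    (show (0:ℝ) ∈ Icc (D a) (D s) from ⟨ha.le, hs0⟩)
  have hys : y = s := le_antisymm hy.2 (hmin ⟨⟨hy.1, hy.2.trans hs.2⟩, hy0.ge⟩)
  rw [hys] at hy0
  have hsb : s < b := lt_of_le_of_ne hs.2 (by rintro rfl; linarith)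
  refine ⟨s, ⟨has, hsb⟩, hy0, ?_⟩
  have t := (hd s ⟨has, hsb⟩).tendsto_slope.mono_left (nhdsLT_le_nhdsNE s)
  refine ge_of_tendsto t ?_
  filter_upwards [Ioo_mem_nhdsLT has] with y hy
  rw [slope_def_field, hy0]
  exact div_nonneg_of_nonpos (by linarith [hlt y ⟨hy.1.le, hy.2⟩]) (by linarith [hy.2])

theorem Sys.slope_ge (S : Sys V V' κ τ UM uMx umx u1f u0f u2f σ m W) {K c : ℝ}
    (h : (K, c) ∈ D1 V V' UM uMx umx) :
    ∃ A > 0, ∀ c', c < c' → (K, c') ∈ D1 V V' UM uMx umx → A * (c' - c) ≤ m K c' - m K c := by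
  have hK := h.1
  have hK' := h.2.1
  dsimp only at hK hK'
  have K0 := S.X.Kpos hK
  have w := S.hW K c h
  have z := S.hz K c h
  obtain ⟨l1, l2, l3, l4, l5⟩ := S.X.loc hK hK' z
  obtain ⟨B, hB⟩ := isCompact_Icc.bddAbove_image w.cont
  have hB' : ∀ x ∈ Icc (u1f K c) (u2f K c), W K c x ≤ B := fun x hx => hB (mem_image_of_mem _ hx)
  have B0 : 0 < B := (w.pos (u0f K c) ⟨by linarith, by linarith⟩).trans_le
    (hB' _ ⟨by linarith, by linarith⟩)
  have u20 : 0 < u2f K c := by linarith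
  refine ⟨2 / (K * u2f K c * B), by positivity, fun c' hcc h' => ?_⟩
  have w' := S.hW K c' h'
  have z' := S.hz K c' h'
  obtain ⟨k1, k2, k3, k4, k5⟩ := S.X.loc hK hK' z'
  have e1 := (zero_iff K0).1 z.2.2.2.1
  have e2 := (zero_iff K0).1 z.2.2.2.2.2.1
  have e1' := (zero_iff K0).1 z'.2.2.2.1
  have e2' := (zero_iff K0).1 z'.2.2.2.2.2.1
  have o1 : u1f K c < u1f K c' := by
    by_contra! hh
    have := (S.X.z1 hK hK').monotoneOn ⟨k1.le, k2.le⟩ ⟨l1.le, l2.le⟩ hh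
    linarith
  have o2 : u2f K c < u2f K c' := by
    by_contra! hh
    have := (S.X.z3 hK hK').monotoneOn (show u2f K c' ∈ Ici (umx K) from k5.le)
      (show u2f K c ∈ Ici (umx K) from l5.le) hh
    linarith
  have o3 : u1f K c' < u2f K c := by linarith
  obtain ⟨x, hx, hx0, hxd⟩ := first_crossing (D := fun x => W K c' x - W K c x)
    (D' := fun x => (g1TV κ τ x * fTV V K c' x / W K c' x +
        g2TV κ τ x * (σ * fdTV V' K x + m K c')) - (g1TV κ τ x * fTV V K c x / W K c x +
        g2TV κ τ x * (σ * fdTV V' K x + m K c))) o3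
    ((w'.cont.mono (Icc_subset_Icc_right o2.le)).sub (w.cont.mono (Icc_subset_Icc_left o1.le)))
    (by have := w.pos _ ⟨o1, o3⟩; have := w'.z1; linarith)
    (by have := w'.pos _ ⟨o3, o2⟩; have := w.z2; linarith)
    (fun x hx => (w'.der x ⟨hx.1, hx.2.trans o2⟩).sub (w.der x ⟨o1.trans hx.1, hx.2⟩))
  have x0 : 0 < x := k1.trans hx.1
  have Wp := w.pos x ⟨o1.trans hx.1, hx.2⟩
  have We : W K c' x = W K c x := by linarith
  have WB := hB' x ⟨(o1.trans hx.1).le, hx.2.le⟩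
  have gp := g1_pos S.hκ S.hτ x0
  rw [We, g2_eq, fTV, fTV] at hxd
  set G := g1TV κ τ x
  set ω := W K c x
  have q : 0 ≤ G * (x / 2 * (m K c' - m K c) - (c' - c) / (K * ω)) := by
    refine hxd.trans (le_of_eq ?_)
    field_simp
    ring
  have q2 : (c' - c) / (K * ω) ≤ x / 2 * (m K c' - m K c) := by
    have := nonneg_of_mul_nonneg_right q gp
    linarith
  have q3 : 2 / (K * x * ω) * (c' - c) ≤ m K c' - m K c := by
    have := mul_le_mul_of_nonneg_left q2 (show (0:ℝ) ≤ 2 / x by positivity)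
    calc _ = 2 / x * ((c' - c) / (K * ω)) := by field_simp
      _ ≤ _ := this
      _ = _ := by field_simp
  refine le_trans ?_ q3
  have : 0 < c' - c := by linarith
  have := hx.2.le
  gcongr

theorem Sys.strictMono (S : Sys V V' κ τ UM uMx umx u1f u0f u2f σ m W) {K : ℝ}
    (hK : V' 0 < K) (hK' : K < V' UM) :
    StrictMonoOn (fun c' => m K c') (Ioo (c1f V umx K) (cMf V uMx K)) := by
  intro c hc c' hc' hcc
  obtain ⟨A, A0, hA⟩ := S.slope_ge (K := K) (c := c) ⟨hK, hK', hc.1, hc.2⟩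
  have := hA c' hcc ⟨hK, hK', hc'.1, hc'.2⟩
  have := mul_pos A0 (sub_pos.2 hcc)
  dsimp only
  linarith

theorem Sys.deriv_pos (S : Sys V V' κ τ UM uMx umx u1f u0f u2f σ m W) {K c : ℝ}
    (h : (K, c) ∈ D1 V V' UM uMx umx) : 0 < deriv (fun c' => m K c') c := by
  obtain ⟨A, A0, hA⟩ := S.slope_ge h
  have hd : DifferentiableAt ℝ (fun c' => m K c') c := by
    have h1 : DifferentiableAt ℝ (fun p : ℝ × ℝ => m p.1 p.2) (K, c) :=
      (S.smooth.differentiableOn one_ne_zero).differentiableAt (S.X.isOpen.mem_nhds h)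
    exact h1.comp c (f := fun c' => (K, c'))
      ((differentiableAt_const K).prodMk differentiableAt_id)
  refine A0.trans_le ?_
  have t := hd.hasDerivAt.tendsto_slope.mono_left (nhdsGT_le_nhdsNE c)
  refine ge_of_tendsto t ?_
  filter_upwards [Ioo_mem_nhdsGT (show c < cMf V uMx K from h.2.2.2)] with c' hc'
  rw [slope_def_field, le_div_iff₀ (sub_pos.2 hc'.1)]
  exact hA c' hc'.1 ⟨h.1, h.2.1, lt_trans h.2.2.1 hc'.1, hc'.2⟩

theorem final_result
    (V V' V'' κ : ℝ → ℝ) (τ UM : ℝ) (uMx umx : ℝ → ℝ)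
    (u1f u0f u2f μbf μff : ℝ → ℝ → ℝ)
    (hA1 : A1 V V' V'' UM) (hA2 : A2 κ) (hτ : 0 < τ)
    (huMx : UMaxHyp V' UM uMx) (humx : UMinHyp V' UM umx)
    (hz : ∀ K c, (K, c) ∈ D1 V V' UM uMx umx →
      ZerosD1 V K c (u1f K c) (u0f K c) (u2f K c))
    (hμb : ∀ K c, (K, c) ∈ D1 V V' UM uMx umx →
      ∀ μ, HasHE1 V V' κ τ K c μ (u1f K c) (u2f K c) ↔ μ = μbf K c)
    (hμf : ∀ K c, (K, c) ∈ D1 V V' UM uMx umx →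
      ∀ μ, HasHE2 V V' κ τ K c μ (u1f K c) (u2f K c) ↔ μ = μff K c) :
    ContDiffOn ℝ 1 (fun p : ℝ × ℝ => μbf p.1 p.2) (D1 V V' UM uMx umx) ∧
    ContDiffOn ℝ 1 (fun p : ℝ × ℝ => μff p.1 p.2) (D1 V V' UM uMx umx) ∧
    (∀ K c, (K, c) ∈ D1 V V' UM uMx umx →
      0 < deriv (fun c' => μbf K c') c ∧ deriv (fun c' => μff K c') c < 0) ∧
    (∀ K, V' 0 < K → K < V' UM →
      StrictMonoOn (fun c' => μbf K c') (Ioo (c1f V umx K) (cMf V uMx K)) ∧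
      StrictAntiOn (fun c' => μff K c') (Ioo (c1f V umx K) (cMf V uMx K))) := by
  have X : Ctx V V' UM uMx umx := mkCtx hA1 huMx humx
  have hb : ∀ K c, ∃ W, (K, c) ∈ D1 V V' UM uMx umx → WProf (fun x => g1TV κ τ x * fTV V K c x)
      (fun x => g2TV κ τ x * (1 * fdTV V' K x + μbf K c)) (u1f K c) (u2f K c) W := by
    intro K c
    by_cases h : (K, c) ∈ D1 V V' UM uMx umx
    · obtain ⟨W, hW⟩ := prof_b ((hμb K c h _).mpr rfl)
      rw [one_mul (μbf K c)] at hW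
      exact ⟨W, fun _ => hW⟩
    · exact ⟨0, fun h' => absurd h' h⟩
  have hf : ∀ K c, ∃ W, (K, c) ∈ D1 V V' UM uMx umx → WProf (fun x => g1TV κ τ x * fTV V K c x)
      (fun x => g2TV κ τ x * ((-1) * fdTV V' K x + -μff K c)) (u1f K c) (u2f K c) W := by
    intro K c
    by_cases h : (K, c) ∈ D1 V V' UM uMx umx
    · obtain ⟨W, hW⟩ := prof_f ((hμf K c h _).mpr rfl)
      rw [neg_one_mul (μff K c)] at hW
      exact ⟨W, fun _ => hW⟩
    · exact ⟨0, fun h' => absurd h' h⟩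
  choose Wb hWb using hb
  choose Wf hWf using hf
  have Sb : Sys V V' κ τ UM uMx umx u1f u0f u2f 1 μbf Wb := ⟨X, hA2, hτ, hz, hWb⟩
  have Sf : Sys V V' κ τ UM uMx umx u1f u0f u2f (-1) (fun K c => -μff K c) Wf :=
    ⟨X, hA2, hτ, hz, hWf⟩
  refine ⟨Sb.smooth, ?_, fun K c h => ⟨Sb.deriv_pos h, ?_⟩, fun K hK hK' =>
    ⟨Sb.strictMono hK hK', ?_⟩⟩
  · have := Sf.smooth.neg
    simpa using this
  · have := Sf.deriv_pos h
    rw [deriv.fun_neg] at this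
    linarith
  · intro a ha b hb hab
    have := Sf.strictMono hK hK' ha hb hab
    dsimp only at this ⊢
    linarith

end

theorem stmt19
    (V V' V'' κ : ℝ → ℝ) (τ UM K₁ : ℝ) (uMx umx : ℝ → ℝ)
    (u1f u0f u2f μbf μff : ℝ → ℝ → ℝ)
    (hA1 : A1 V V' V'' UM) (hA2 : A2 κ) (hτ : 0 < τ)
    (huMx : UMaxHyp V' UM uMx) (humx : UMinHyp V' UM umx)
    (hK1 : K1Hyp V V' UM umx K₁)
    (hz : ∀ K c, (K, c) ∈ D1 V V' UM uMx umx →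
      ZerosD1 V K c (u1f K c) (u0f K c) (u2f K c))
    (hμb : ∀ K c, (K, c) ∈ D1 V V' UM uMx umx →
      ∀ μ, HasHE1 V V' κ τ K c μ (u1f K c) (u2f K c) ↔ μ = μbf K c)
    (hμf : ∀ K c, (K, c) ∈ D1 V V' UM uMx umx →
      ∀ μ, HasHE2 V V' κ τ K c μ (u1f K c) (u2f K c) ↔ μ = μff K c) :
    ContDiffOn ℝ 1 (fun p : ℝ × ℝ => μbf p.1 p.2) (D1 V V' UM uMx umx) ∧
    ContDiffOn ℝ 1 (fun p : ℝ × ℝ => μff p.1 p.2) (D1 V V' UM uMx umx) ∧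
    (∀ K c, (K, c) ∈ D1 V V' UM uMx umx →
      0 < deriv (fun c' => μbf K c') c ∧ deriv (fun c' => μff K c') c < 0) ∧
    (∀ K, V' 0 < K → K < V' UM →
      StrictMonoOn (fun c' => μbf K c') (Ioo (c1f V umx K) (cMf V uMx K)) ∧
      StrictAntiOn (fun c' => μff K c') (Ioo (c1f V umx K) (cMf V uMx K))) := by
  exact final_result V V' V'' κ τ UM uMx umx u1f u0f u2f μbf μff hA1 hA2 hτ huMx humx hz hμb hμf

end TrafficTW
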